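/- arXiv:2405.11085 — 6 statements merged into one kernel-verified Lean document; each statement's English description precedes it below -/
import Mathlib

section
/- Let M = (Q,T) be a d-dimensional affine continuous VASS all of whose transition matrices have only non-negative entries. For every configuration p(u) of M and every state q ∈ Q: p(u) can reach some configuration whose state is q (i.e., p(u) →* q(v') for some v' ∈ ℚ₊^d) if and only if, in the support abstraction graph SU_M, there is a directed path from the vertex (p, supp(u)) to some vertex of the form (q, S). -/
namespace ACVASS

/-- Vectors of rationals indexed by counters. -/
abbrev Vec (d : ℕ) := Fin d → ℚ

/-- A vector is componentwise non-negative (i.e. lies in ℚ₊^d). -/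
def NonNeg {d : ℕ} (u : Vec d) : Prop := ∀ i, 0 ≤ u i

/-- Square integer matrices of dimension d. -/
abbrev Mat (d : ℕ) := Matrix (Fin d) (Fin d) ℤ

/-- Transitions of a d-dimensional affine continuous VASS. -/
abbrev Trans (Q : Type) (d : ℕ) := Q × Mat d × (Fin d → ℤ) × Q

def Trans.src {Q : Type} {d : ℕ} (t : Trans Q d) : Q := t.1
def Trans.mat {Q : Type} {d : ℕ} (t : Trans Q d) : Mat d := t.2.1
def Trans.upd {Q : Type} {d : ℕ} (t : Trans Q d) : Fin d → ℤ := t.2.2.1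
def Trans.tgt {Q : Type} {d : ℕ} (t : Trans Q d) : Q := t.2.2.2

/-- Cast an integer matrix to a rational matrix. -/
def castMat {d : ℕ} (A : Mat d) : Matrix (Fin d) (Fin d) ℚ := A.map (Int.cast)

/-- Cast an integer vector to a rational vector. -/
def castVec {d : ℕ} (b : Fin d → ℤ) : Vec d := fun i => (b i : ℚ)

/-- A d-dimensional affine continuous VASS: a finite set of transitions. -/
structure ACV (Q : Type) (d : ℕ) where
  T : Finset (Trans Q d)

/-- Configurations: a state together with a vector of counter values. -/
abbrev Conf (Q : Type) (d : ℕ) := Q × Vec d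

/-- A step `p(u) →^{αt} q(v)`: `t` is a transition of `M`, `α ∈ (0,1]`, both
configurations are non-negative and `v = A·u + α·b`. -/
def Step {Q : Type} {d : ℕ} (M : ACV Q d) (C : Conf Q d) (α : ℚ) (t : Trans Q d)
    (C' : Conf Q d) : Prop :=
  t ∈ M.T ∧ 0 < α ∧ α ≤ 1 ∧ C.1 = t.src ∧ C'.1 = t.tgt ∧
    NonNeg C.2 ∧ NonNeg C'.2 ∧
    C'.2 = (castMat t.mat).mulVec C.2 + α • castVec t.upd

/-- Firing sequences. -/
abbrev FSeq (Q : Type) (d : ℕ) := List (ℚ × Trans Q d)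

/-- `Run M C π C'` : `C →^π C'`, i.e. the steps of `π` can be realized in order. -/
inductive Run {Q : Type} {d : ℕ} (M : ACV Q d) : Conf Q d → FSeq Q d → Conf Q d → Prop
  | nil (C : Conf Q d) (h : NonNeg C.2) : Run M C [] C
  | cons {C C' C'' : Conf Q d} {α : ℚ} {t : Trans Q d} {π : FSeq Q d} :
      Step M C α t C' → Run M C' π C'' → Run M C ((α, t) :: π) C''

/-- `C →* C'`. -/
def Reach {Q : Type} {d : ℕ} (M : ACV Q d) (C C' : Conf Q d) : Prop := ∃ π, Run M C π C'

/-- `p(u)` covers `q(v)`: `p(u) →* q(v')` for some `v' ≥ v`. -/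
def Covers {Q : Type} {d : ℕ} (M : ACV Q d) (C C' : Conf Q d) : Prop :=
  ∃ v', C'.2 ≤ v' ∧ Reach M C (C'.1, v')

/-- Support of a vector. -/
def supp {d : ℕ} (u : Vec d) : Set (Fin d) := {i | u i ≠ 0}

/-- `supp_t^-(x) = {y : A(x,y) > 0}`. -/
def suppMinus {Q : Type} {d : ℕ} (t : Trans Q d) (x : Fin d) : Set (Fin d) :=
  {y | 0 < t.mat x y}

/-- `supp_t^+ = {x : b(x) > 0}`. -/
def suppPlus {Q : Type} {d : ℕ} (t : Trans Q d) : Set (Fin d) := {x | 0 < t.upd x}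

/-- `supp_t^p(x)`: counters that can pump `x` via transition `t`. -/
def suppPump {Q : Type} {d : ℕ} (t : Trans Q d) (x : Fin d) : Set (Fin d) :=
  {y | (y ≠ x ∧ 0 < t.mat x y) ∨ (y = x ∧ 1 < t.mat x y)}

/-- The set of transitions occurring in a firing sequence. -/
def seqSupp {Q : Type} {d : ℕ} (π : FSeq Q d) : Set (Trans Q d) := {t | ∃ α, (α, t) ∈ π}

/-- Non-negative matrix. -/
def NonNegMat {d : ℕ} (A : Mat d) : Prop := ∀ i j, 0 ≤ A i j

/-- Non-negative self-loop matrix: non-negative with no zero diagonal entry. -/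
def SelfLoopMat {d : ℕ} (A : Mat d) : Prop := NonNegMat A ∧ ∀ i, A i i ≠ 0

/-- All transition matrices of `M` are non-negative. -/
def NonNegVASS {Q : Type} {d : ℕ} (M : ACV Q d) : Prop := ∀ t ∈ M.T, NonNegMat t.mat

/-- All transition matrices of `M` are non-negative self-loop matrices. -/
def SelfLoopVASS {Q : Type} {d : ℕ} (M : ACV Q d) : Prop := ∀ t ∈ M.T, SelfLoopMat t.mat

/-- `β·π`: scale all fractions of a firing sequence by `β`. -/
def scaleSeq {Q : Type} {d : ℕ} (β : ℚ) (π : FSeq Q d) : FSeq Q d :=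
  π.map (fun p => (β * p.1, p.2))

/-- Counter `x` is pumped by transition `t` in the run obtained by firing `π` from `C`:
some step of the run uses `t` from a source configuration `C₁` with a counter
`y ∈ supp_t^p(x)` of positive value. -/
def PumpedBy {Q : Type} {d : ℕ} (M : ACV Q d) (C : Conf Q d) (π : FSeq Q d)
    (t : Trans Q d) (x : Fin d) : Prop :=
  ∃ (π₁ : FSeq Q d) (α : ℚ) (π₂ : FSeq Q d) (C₁ C₂ : Conf Q d),
    π = π₁ ++ (α, t) :: π₂ ∧ Run M C π₁ C₁ ∧ Step M C₁ α t C₂ ∧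
    ∃ y ∈ suppPump t x, 0 < C₁.2 y

/-- Counter `x` is pumped in the run obtained by firing `π` from `C`. -/
def Pumps {Q : Type} {d : ℕ} (M : ACV Q d) (C : Conf Q d) (π : FSeq Q d) (x : Fin d) : Prop :=
  ∃ t, PumpedBy M C π t x

/-- Edges of the support abstraction `SU_M`. -/
def SuppEdge {Q : Type} {d : ℕ} (M : ACV Q d) (v : Q × Set (Fin d)) (t : Trans Q d)
    (v' : Q × Set (Fin d)) : Prop :=
  t ∈ M.T ∧ v.1 = t.src ∧ v'.1 = t.tgt ∧
    ∀ x : Fin d,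
      (t.upd x < 0 → (suppMinus t x ∩ v.2).Nonempty) ∧
      (0 < t.upd x → x ∈ v'.2) ∧
      (x ∈ v'.2 → 0 < t.upd x ∨ (suppMinus t x ∩ v.2).Nonempty)

/-- Directed-path reachability in the support abstraction `SU_M`. -/
def SuppReach {Q : Type} {d : ℕ} (M : ACV Q d) :
    Q × Set (Fin d) → Q × Set (Fin d) → Prop :=
  Relation.ReflTransGen (fun a b => ∃ t, SuppEdge M a t b)

/-- A step of the continuous VASS `M_X` (only the counters in `X` are tracked). -/
def StepX {Q : Type} {d : ℕ} (M : ACV Q d) (X : Set (Fin d)) (p : Q) (u : Vec d) (α : ℚ)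
    (t : Trans Q d) (q : Q) (v : Vec d) : Prop :=
  t ∈ M.T ∧ 0 < α ∧ α ≤ 1 ∧ p = t.src ∧ q = t.tgt ∧
    (∀ i ∈ X, 0 ≤ u i) ∧ (∀ i ∈ X, 0 ≤ v i) ∧ (∀ i ∈ X, v i = u i + α * castVec t.upd i)

/-- A run of the continuous VASS `M_X`; vectors matter only on the counters of `X`. -/
inductive RunX {Q : Type} {d : ℕ} (M : ACV Q d) (X : Set (Fin d)) :
    Q → Vec d → FSeq Q d → Q → Vec d → Prop
  | nil (p : Q) (u v : Vec d) (h : ∀ i ∈ X, 0 ≤ u i ∧ u i = v i) : RunX M X p u [] p v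
  | cons {p r q : Q} {u w v : Vec d} {α : ℚ} {t : Trans Q d} {π : FSeq Q d} :
      StepX M X p u α t r w → RunX M X r w π q v → RunX M X p u ((α, t) :: π) q v

/-- One edge of the graph `G_M` using only transitions from `S`. -/
def GStep {Q : Type} {d : ℕ} (S : Set (Trans Q d)) (a b : Q) : Prop :=
  ∃ t ∈ S, t.src = a ∧ t.tgt = b

/-- A (possibly empty) path in the graph `G_M` using only transitions from `S`. -/
def GPath {Q : Type} {d : ℕ} (S : Set (Trans Q d)) : Q → Q → Prop :=
  Relation.ReflTransGen (GStep S)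

/-- `Rep-Half(π)`: the i-th fraction of `π` is divided by `2^i`. -/
def repHalf {Q : Type} {d : ℕ} : FSeq Q d → FSeq Q d
  | [] => []
  | (α, t) :: rest => (α / 2, t) :: scaleSeq (1 / 2) (repHalf rest)

/-- Descending partial product `A_{ℓ-1} ⋯ A_j` (0-indexed); for `j = ℓ` this is
the identity matrix. -/
def descProd {d ℓ : ℕ} (A : Fin ℓ → Matrix (Fin d) (Fin d) ℚ) (j : ℕ) :
    Matrix (Fin d) (Fin d) ℚ :=
  (((List.finRange ℓ).drop j).reverse.map A).prod

/-- The permutation matrix `P_σ` with `P_σ(i,j) = 1` iff `σ(i) = j`. -/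
def permMat {n : ℕ} (σ : Equiv.Perm (Fin n)) : Matrix (Fin n) (Fin n) ℤ :=
  Matrix.of fun i j => if σ i = j then 1 else 0

/-- A matrix is a permutation matrix. -/
def IsPermMat {d : ℕ} (A : Mat d) : Prop := ∃ σ : Equiv.Perm (Fin d), A = permMat σ

/-- The n×n block-diagonal matrix with blocks `I_o`, `A`, `I_{n-o-k}`:
`A` occupies rows/columns `o,…,o+k-1` and the rest is identity. -/
def applyBlock {k : ℕ} (A : Matrix (Fin k) (Fin k) ℤ) (o n : ℕ) :
    Matrix (Fin n) (Fin n) ℤ :=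
  Matrix.of fun r c =>
    if h : o ≤ r.val ∧ r.val < o + k ∧ o ≤ c.val ∧ c.val < o + k then
      A ⟨r.val - o, by omega⟩ ⟨c.val - o, by omega⟩
    else if r.val = c.val then 1 else 0

/-- Transitions of a continuous VASS (with identity matrices left implicit). -/
abbrev CTrans (Q : Type) (d : ℕ) := Q × (Fin d → ℤ) × Q

/-- Zero-tests. -/
abbrev ZTest (Q : Type) (d : ℕ) := Q × Fin d × Q

/-- A d-dimensional continuous VASS with zero-tests. -/
structure CVZ (Q : Type) (d : ℕ) where
  T : Finset (CTrans Q d)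
  T0 : Finset (ZTest Q d)

/-- A transition step of a continuous VASS with zero-tests. -/
def CStep {Q : Type} {d : ℕ} (M : CVZ Q d) (C : Conf Q d) (α : ℚ) (t : CTrans Q d)
    (C' : Conf Q d) : Prop :=
  t ∈ M.T ∧ 0 < α ∧ α ≤ 1 ∧ C.1 = t.1 ∧ C'.1 = t.2.2 ∧
    NonNeg C.2 ∧ NonNeg C'.2 ∧ C'.2 = C.2 + α • castVec t.2.1

/-- A zero-test step of a continuous VASS with zero-tests. -/
def ZStep {Q : Type} {d : ℕ} (M : CVZ Q d) (C : Conf Q d) (t : ZTest Q d)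
    (C' : Conf Q d) : Prop :=
  t ∈ M.T0 ∧ C.1 = t.1 ∧ C'.1 = t.2.2 ∧ NonNeg C.2 ∧ C.2 t.2.1 = 0 ∧ C'.2 = C.2

/-- A d-dimensional continuous VASS. -/
structure CV (Q : Type) (d : ℕ) where
  T : Finset (CTrans Q d)

/-- A step of a continuous VASS. -/
def CVStep {Q : Type} {d : ℕ} (M : CV Q d) (C : Conf Q d) (α : ℚ) (t : CTrans Q d)
    (C' : Conf Q d) : Prop :=
  t ∈ M.T ∧ 0 < α ∧ α ≤ 1 ∧ C.1 = t.1 ∧ C'.1 = t.2.2 ∧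
    NonNeg C.2 ∧ NonNeg C'.2 ∧ C'.2 = C.2 + α • castVec t.2.1

/-- Reachability (`→*`) in a continuous VASS. -/
def CVReach {Q : Type} {d : ℕ} (M : CV Q d) : Conf Q d → Conf Q d → Prop :=
  Relation.ReflTransGen (fun C C' => ∃ α t, CVStep M C α t C')


theorem mulVec_castMat {d : ℕ} (A : Mat d) (u : Vec d) (x : Fin d) :
    (castMat A).mulVec u x = ∑ y, (A x y : ℚ) * u y := by
  simp [Matrix.mulVec, dotProduct, castMat]

theorem mulVec_nn {d : ℕ} (A : Mat d) (hA : NonNegMat A) (u : Vec d) (hu : NonNeg u)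
    (x : Fin d) : 0 ≤ (castMat A).mulVec u x := by
  rw [mulVec_castMat]
  exact Finset.sum_nonneg fun y _ => mul_nonneg (by exact_mod_cast hA x y) (hu y)

theorem mulVec_pos_iff {Q : Type} {d : ℕ} (t : Trans Q d) (hA : NonNegMat t.mat) (u : Vec d)
    (hu : NonNeg u) (x : Fin d) :
    0 < (castMat t.mat).mulVec u x ↔ (suppMinus t x ∩ supp u).Nonempty := by
  rw [mulVec_castMat]
  have hn : ∀ y ∈ Finset.univ, 0 ≤ (t.mat x y : ℚ) * u y :=
    fun y _ => mul_nonneg (by exact_mod_cast hA x y) (hu y)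
  rw [Finset.sum_pos_iff_of_nonneg hn]
  constructor
  · rintro ⟨y, _, hy⟩
    refine ⟨y, ?_, ?_⟩
    · refine lt_of_le_of_ne (hA x y) ?_
      intro h
      rw [← h] at hy
      simp at hy
    · intro h
      rw [h] at hy
      simp at hy
  · rintro ⟨y, h1, h2⟩
    have h1' : 0 < t.mat x y := h1
    exact ⟨y, Finset.mem_univ _, mul_pos (by exact_mod_cast h1') (lt_of_le_of_ne (hu y) (Ne.symm h2))⟩

theorem step_edge {Q : Type} {d : ℕ} (M : ACV Q d) (hM : NonNegVASS M) (C C' : Conf Q d)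
    (α : ℚ) (t : Trans Q d) (h : Step M C α t C') :
    SuppEdge M (C.1, supp C.2) t (C'.1, supp C'.2) := by
  obtain ⟨ht, h0, h1, hs, hg, hn, hn', he⟩ := h
  refine ⟨ht, hs, hg, fun x => ?_⟩
  have hx : C'.2 x = (castMat t.mat).mulVec C.2 x + α * (t.upd x : ℚ) := by
    rw [he]; simp [castVec]
  have hv := hn' x
  have ha := mulVec_nn t.mat (hM t ht) C.2 hn x
  show (_ → (suppMinus t x ∩ supp C.2).Nonempty) ∧ (_ → C'.2 x ≠ 0) ∧
    (C'.2 x ≠ 0 → _ ∨ (suppMinus t x ∩ supp C.2).Nonempty)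
  rw [← mulVec_pos_iff t (hM t ht) C.2 hn x]
  refine ⟨fun hb => ?_, fun hb => ?_, fun hb => ?_⟩
  · have hb' : (t.upd x : ℚ) < 0 := by exact_mod_cast hb
    nlinarith
  · have hb' : (0 : ℚ) < t.upd x := by exact_mod_cast hb
    have := mul_pos h0 hb'
    linarith
  · by_contra! hc
    have hb' : (t.upd x : ℚ) ≤ 0 := by exact_mod_cast hc.1
    apply hb
    have := hc.2
    nlinarith

theorem edge_step {Q : Type} {d : ℕ} (M : ACV Q d) (hM : NonNegVASS M)
    (a b : Q × Set (Fin d)) (t : Trans Q d) (h : SuppEdge M a t b) (u : Vec d)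
    (hu : NonNeg u) (hS : a.2 ⊆ supp u) :
    ∃ α v, Step M (a.1, u) α t (b.1, v) ∧ b.2 ⊆ supp v := by
  obtain ⟨ht, hs, hg, hx⟩ := h
  have key : ∀ x, ∃ β : ℚ, 0 < β ∧ ∀ α, 0 < α → α ≤ β →
      0 ≤ (castMat t.mat).mulVec u x + α * (t.upd x : ℚ) ∧
      (x ∈ b.2 → (castMat t.mat).mulVec u x + α * (t.upd x : ℚ) ≠ 0) := by
    intro x
    have ha := mulVec_nn t.mat (hM t ht) u hu x
    have hp : (suppMinus t x ∩ a.2).Nonempty → 0 < (castMat t.mat).mulVec u x := fun hne =>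
      (mulVec_pos_iff t (hM t ht) u hu x).2 (hne.mono (Set.inter_subset_inter_right _ hS))
    obtain ⟨hx1, hx2, hx3⟩ := hx x
    rcases lt_or_ge (t.upd x) 0 with hb | hb
    · have hpos := hp (hx1 hb)
      have hb' : (t.upd x : ℚ) < 0 := by exact_mod_cast hb
      set w := (castMat t.mat).mulVec u x
      have hc : (0 : ℚ) < -(2 * t.upd x) := by linarith
      refine ⟨w / (-(2 * t.upd x)), div_pos hpos hc, fun α h0 hα => ?_⟩
      rw [le_div_iff₀ hc] at hα
      have : 0 < w + α * (t.upd x : ℚ) := by linarith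
      exact ⟨this.le, fun _ => this.ne'⟩
    · have hb' : (0 : ℚ) ≤ t.upd x := by exact_mod_cast hb
      refine ⟨1, one_pos, fun α h0 _ => ⟨by positivity, fun hm => ?_⟩⟩
      rcases hx3 hm with h | h
      · have hb2 : (0 : ℚ) < t.upd x := by exact_mod_cast h
        positivity
      · have := hp h
        positivity
  choose β hβ0 hβ using key
  obtain ⟨α, h0, h1, hα⟩ : ∃ α : ℚ, 0 < α ∧ α ≤ 1 ∧ ∀ x, α ≤ β x := by
    have hne : (insert (1 : ℚ) (Finset.univ.image β)).Nonempty := Finset.insert_nonempty _ _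
    refine ⟨(insert (1 : ℚ) (Finset.univ.image β)).min' hne, ?_, ?_, fun x => ?_⟩
    · rw [Finset.lt_min'_iff]
      intro y hy
      simp only [Finset.mem_insert, Finset.mem_image, Finset.mem_univ, true_and] at hy
      rcases hy with rfl | ⟨x, rfl⟩
      · exact one_pos
      · exact hβ0 x
    · exact Finset.min'_le _ _ (by simp)
    · exact Finset.min'_le _ _ (by simp)
  have hv : ∀ x, ((castMat t.mat).mulVec u + α • castVec t.upd) x =
      (castMat t.mat).mulVec u x + α * (t.upd x : ℚ) := fun x => by simp [castVec]
  refine ⟨α, (castMat t.mat).mulVec u + α • castVec t.upd,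
    ⟨ht, h0, h1, hs, hg, hu, fun x => ?_, rfl⟩, fun x hxb => ?_⟩
  · show 0 ≤ ((castMat t.mat).mulVec u + α • castVec t.upd) x
    rw [hv]; exact (hβ x α h0 (hα x)).1
  · show ((castMat t.mat).mulVec u + α • castVec t.upd) x ≠ 0
    rw [hv]; exact (hβ x α h0 (hα x)).2 hxb

theorem run_suppReach {Q : Type} {d : ℕ} (M : ACV Q d) (hM : NonNegVASS M) (C C' : Conf Q d)
    (π : FSeq Q d) (h : Run M C π C') : SuppReach M (C.1, supp C.2) (C'.1, supp C'.2) := by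
  induction h with
  | nil C h => exact Relation.ReflTransGen.refl
  | cons hst _ ih => exact Relation.ReflTransGen.head ⟨_, step_edge M hM _ _ _ _ hst⟩ ih

theorem suppReach_run {Q : Type} {d : ℕ} (M : ACV Q d) (hM : NonNegVASS M)
    (a b : Q × Set (Fin d)) (h : SuppReach M a b) :
    ∀ u : Vec d, NonNeg u → a.2 ⊆ supp u →
      ∃ v : Vec d, NonNeg v ∧ Reach M (a.1, u) (b.1, v) := by
  induction h using Relation.ReflTransGen.head_induction_on with
  | refl => exact fun u hu _ => ⟨u, hu, [], Run.nil _ hu⟩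
  | head hac _ ih =>
    intro u hu hS
    obtain ⟨t, hac⟩ := hac
    obtain ⟨α, w, hst, hw⟩ := edge_step M hM _ _ t hac u hu hS
    obtain ⟨v, hv, π, hr⟩ := ih w hst.2.2.2.2.2.2.1 hw
    exact ⟨v, hv, _, Run.cons hst hr⟩

/-- state-reachability corresponds to reachability in the
support abstraction, for affine continuous VASS with non-negative matrices. -/
theorem state_reachability_iff_support_abstraction
    {Q : Type} [Fintype Q] {d : ℕ} (M : ACV Q d) (hM : NonNegVASS M)
    (p q : Q) (u : Vec d) (hu : NonNeg u) :
    (∃ v : Vec d, NonNeg v ∧ Reach M (p, u) (q, v)) ↔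
      ∃ S : Set (Fin d), SuppReach M (p, supp u) (q, S) := by
  constructor
  · rintro ⟨v, _, π, hr⟩
    exact ⟨supp v, run_suppReach M hM _ _ π hr⟩
  · rintro ⟨S, h⟩
    exact suppReach_run M hM _ _ h u hu subset_rfl

end ACVASS
end

section
/- (Coverability Characterization Lemma) Let M = (Q,T) be a d-dimensional affine continuous VASS all of whose transition matrices are non-negative self-loop matrices, and let p(u), p(v) be configurations with the same state p. Then p(u) covers p(v) in M if and only if there exist a set of counters X ⊆ {1,…,d}, a vector w ∈ ℚ₊^d with w ≥ v, and firing sequences π', π_fwd of M such that: (1) p(u|_X) →^{π'_X} p(w|_X) is a run in the continuous VASS M_X; (2) π_fwd is p-admissible from p(u) in M; (3) every counter x not in X is pumped in the run obtained by firing π_fwd from p(u); (4) the set of transitions occurring in π' equals the set of transitions occurring in π_fwd. -/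
namespace ACVASS

section helpers
variable {Q : Type} {d : ℕ}

def eff (σ : FSeq Q d) (x : Fin d) : ℚ := (σ.map fun a => a.1 * (a.2.upd x : ℚ)).sum
def bd (σ : FSeq Q d) (x : Fin d) : ℚ := (σ.map fun a => |a.1 * (a.2.upd x : ℚ)|).sum
open Classical in
noncomputable def par (σ : FSeq Q d) (t : Trans Q d) : ℚ :=
  (σ.map fun a => if a.2 = t then a.1 else 0).sum
def nxt (a : ℚ × Trans Q d) (s : Vec d) : Vec d :=
  (castMat a.2.mat).mulVec s + a.1 • castVec a.2.upd
def finM : Vec d → FSeq Q d → Vec d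
  | s, [] => s
  | s, a :: σ => finM (nxt a s) σ
def AdmM : Vec d → FSeq Q d → Prop
  | s, [] => NonNeg s
  | s, a :: σ => NonNeg s ∧ AdmM (nxt a s) σ
def Adm1 (x : Fin d) : ℚ → FSeq Q d → Prop
  | s, [] => 0 ≤ s
  | s, a :: σ => 0 ≤ s ∧ Adm1 x (s + a.1 * (a.2.upd x : ℚ)) σ
def Ok (M : ACV Q d) : Q → FSeq Q d → Q → Prop
  | p, [], q => p = q
  | p, a :: σ, q => a.2 ∈ M.T ∧ 0 < a.1 ∧ a.1 ≤ 1 ∧ p = a.2.src ∧ Ok M a.2.tgt σ q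
def Sc (κ : ℚ) (π ρ : FSeq Q d) : Prop :=
  List.Forall₂ (fun a b => b.2 = a.2 ∧ 0 < b.1 ∧ b.1 ≤ κ * a.1) π ρ

@[simp] lemma eff_nil (x : Fin d) : eff ([] : FSeq Q d) x = 0 := rfl
@[simp] lemma eff_cons (a) (σ : FSeq Q d) (x : Fin d) :
    eff (a :: σ) x = a.1 * (a.2.upd x : ℚ) + eff σ x := by simp [eff]
@[simp] lemma bd_nil (x : Fin d) : bd ([] : FSeq Q d) x = 0 := rfl
@[simp] lemma bd_cons (a) (σ : FSeq Q d) (x : Fin d) :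
    bd (a :: σ) x = |a.1 * (a.2.upd x : ℚ)| + bd σ x := by simp [bd]
lemma eff_append (σ τ : FSeq Q d) (x : Fin d) : eff (σ ++ τ) x = eff σ x + eff τ x := by
  simp [eff]
lemma bd_append (σ τ : FSeq Q d) (x : Fin d) : bd (σ ++ τ) x = bd σ x + bd τ x := by
  simp [bd]
lemma par_append (σ τ : FSeq Q d) (t) : par (σ ++ τ) t = par σ t + par τ t := by
  simp [par]
open Classical in
@[simp] lemma par_cons (a) (σ : FSeq Q d) (t) :
    par (a :: σ) t = (if a.2 = t then a.1 else 0) + par σ t := by simp [par]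
@[simp] lemma par_nil (t) : par ([] : FSeq Q d) t = 0 := rfl

lemma bd_nonneg (σ : FSeq Q d) (x : Fin d) : 0 ≤ bd σ x := by
  induction σ with
  | nil => simp
  | cons a σ ih => rw [bd_cons]; positivity

lemma abs_eff_le (σ : FSeq Q d) (x : Fin d) : |eff σ x| ≤ bd σ x := by
  induction σ with
  | nil => simp
  | cons a σ ih => rw [eff_cons, bd_cons]; exact (abs_add_le _ _).trans (by linarith)

lemma bd_zero {σ : FSeq Q d} {x : Fin d} (h : ∀ a ∈ σ, a.2.upd x = 0) : bd σ x = 0 := by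
  induction σ with
  | nil => simp
  | cons a σ ih =>
    rw [bd_cons, ih (fun b hb => h b (by simp [hb])), h a (by simp)]; simp

lemma eff_zero {σ : FSeq Q d} {x : Fin d} (h : ∀ a ∈ σ, a.2.upd x = 0) : eff σ x = 0 := by
  have := abs_eff_le σ x
  rw [bd_zero h] at this
  exact abs_nonpos_iff.mp this

/-- scaling by a transition-dependent factor -/
def smap (c : Trans Q d → ℚ) (σ : FSeq Q d) : FSeq Q d := σ.map fun a => (c a.2 * a.1, a.2)

lemma eff_smap (c : ℚ) (σ : FSeq Q d) (x) : eff (smap (fun _ => c) σ) x = c * eff σ x := by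
  induction σ with
  | nil => simp [smap]
  | cons a σ ih => simp only [smap, List.map_cons, eff_cons] at *; rw [ih]; ring
lemma bd_smap (c : ℚ) (hc : 0 ≤ c) (σ : FSeq Q d) (x) :
    bd (smap (fun _ => c) σ) x = c * bd σ x := by
  induction σ with
  | nil => simp [smap]
  | cons a σ ih =>
    simp only [smap, List.map_cons, bd_cons] at *; rw [ih, mul_assoc, abs_mul, abs_of_nonneg hc]
    ring
lemma par_smap (c : Trans Q d → ℚ) (σ : FSeq Q d) (t) :
    par (smap c σ) t = c t * par σ t := by
  induction σ with
  | nil => simp [smap]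
  | cons a σ ih =>
    simp only [smap, List.map_cons, par_cons] at *; rw [ih]
    split_ifs with h
    · rw [h]; ring
    · ring
lemma smap_mem {c : Trans Q d → ℚ} {σ : FSeq Q d} {a} (h : a ∈ smap c σ) :
    ∃ b ∈ σ, a.2 = b.2 := by
  simp only [smap, List.mem_map] at h
  obtain ⟨b, hb, rfl⟩ := h
  exact ⟨b, hb, rfl⟩

open Classical in
lemma eff_eq_par {M : ACV Q d} {σ : FSeq Q d} (h : ∀ a ∈ σ, a.2 ∈ M.T) (x) :
    eff σ x = ∑ t ∈ M.T, par σ t * (t.upd x : ℚ) := by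
  induction σ with
  | nil => simp
  | cons a σ ih =>
    simp only [eff_cons, par_cons, add_mul, Finset.sum_add_distrib]
    rw [ih (fun b hb => h b (by simp [hb]))]
    simp [ite_mul, h a (by simp)]

open Classical in
lemma bd_eq_par {M : ACV Q d} {σ : FSeq Q d} (h : ∀ a ∈ σ, a.2 ∈ M.T) (hp : ∀ a ∈ σ, 0 < a.1) (x) :
    bd σ x = ∑ t ∈ M.T, par σ t * |(t.upd x : ℚ)| := by
  induction σ with
  | nil => simp
  | cons a σ ih =>
    simp only [bd_cons, par_cons, add_mul, Finset.sum_add_distrib]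
    rw [ih (fun b hb => h b (by simp [hb])) (fun b hb => hp b (by simp [hb]))]
    simp [ite_mul, h a (by simp), abs_mul, abs_of_pos (hp a (by simp))]

lemma par_nonneg {σ : FSeq Q d} (hp : ∀ a ∈ σ, 0 < a.1) (t) : 0 ≤ par σ t := by
  classical
  induction σ with
  | nil => simp
  | cons a σ ih =>
    rw [par_cons]
    have := ih (fun b hb => hp b (by simp [hb]))
    have := hp a (by simp)
    split_ifs <;> linarith

lemma par_pos {σ : FSeq Q d} (hp : ∀ a ∈ σ, 0 < a.1) {a} (ha : a ∈ σ) : 0 < par σ a.2 := by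
  classical
  induction σ with
  | nil => simp at ha
  | cons b σ ih =>
    rw [par_cons]
    have h1 := par_nonneg (fun b hb => hp b (by simp [hb])) (σ := σ) a.2
    have := hp b (by simp)
    rcases List.mem_cons.1 ha with rfl | h
    · simp; linarith
    · have := ih (fun b hb => hp b (by simp [hb])) h
      split_ifs <;> linarith

lemma par_not_mem {σ : FSeq Q d} {t} (h : ∀ a ∈ σ, a.2 ≠ t) : par σ t = 0 := by
  classical
  induction σ with
  | nil => simp
  | cons b σ ih =>
    rw [par_cons, ih (fun b hb => h b (by simp [hb])), if_neg (h b (by simp))]; simp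

lemma Ok.mem {M : ACV Q d} {p q} {σ : FSeq Q d} (h : Ok M p σ q) :
    ∀ a ∈ σ, a.2 ∈ M.T ∧ 0 < a.1 ∧ a.1 ≤ 1 := by
  induction σ generalizing p with
  | nil => simp
  | cons b σ ih =>
    obtain ⟨h1, h2, h3, h4, h5⟩ := h
    intro a ha
    rcases List.mem_cons.1 ha with rfl | h
    · exact ⟨h1, h2, h3⟩
    · exact ih h5 a h

lemma Ok.append {M : ACV Q d} {p q r} {σ τ : FSeq Q d} (h : Ok M p σ q) (h' : Ok M q τ r) :
    Ok M p (σ ++ τ) r := by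
  induction σ generalizing p with
  | nil => cases h; exact h'
  | cons b σ ih =>
    obtain ⟨h1, h2, h3, h4, h5⟩ := h
    exact ⟨h1, h2, h3, h4, ih h5⟩

lemma Ok.smap {M : ACV Q d} {p q} {σ : FSeq Q d} {c : Trans Q d → ℚ} (h : Ok M p σ q)
    (hc : ∀ a ∈ σ, 0 < c a.2 ∧ c a.2 ≤ 1) : Ok M p (smap c σ) q := by
  induction σ generalizing p with
  | nil => exact h
  | cons b σ ih =>
    obtain ⟨h1, h2, h3, h4, h5⟩ := h
    obtain ⟨c1, c2⟩ := hc b (by simp)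
    exact ⟨h1, mul_pos c1 h2, by simpa using mul_le_one₀ c2 h2.le h3, h4,
      ih h5 (fun a ha => hc a (by simp [ha]))⟩

lemma Sc.ok {M : ACV Q d} {p q} {κ : ℚ} (hκ : κ ≤ 1) {π ρ : FSeq Q d} (hs : Sc κ π ρ)
    (h : Ok M p π q) : Ok M p ρ q := by
  induction hs generalizing p with
  | nil => exact h
  | cons hab _ ih =>
    obtain ⟨h1, h2, h3, h4, h5⟩ := h
    obtain ⟨e1, e2, e3⟩ := hab
    refine ⟨e1 ▸ h1, e2, ?_, e1 ▸ h4, ih (e1 ▸ h5)⟩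
    nlinarith

lemma Sc.par_le {κ : ℚ} {π ρ : FSeq Q d} (hs : Sc κ π ρ) (t) : par ρ t ≤ κ * par π t := by
  classical
  induction hs with
  | nil => simp
  | cons hab _ ih =>
    obtain ⟨e1, e2, e3⟩ := hab
    rw [par_cons, par_cons, e1]
    split_ifs <;> linarith

lemma Sc.mem {κ : ℚ} {π ρ : FSeq Q d} (hs : Sc κ π ρ) {b} (hb : b ∈ ρ) :
    0 < b.1 ∧ ∃ a ∈ π, b.2 = a.2 := by
  induction hs with
  | nil => simp at hb
  | cons hab _ ih =>
    rcases List.mem_cons.1 hb with rfl | h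
    · exact ⟨hab.2.1, _, by simp, hab.1⟩
    · obtain ⟨h1, a, ha, e⟩ := ih h
      exact ⟨h1, a, by simp [ha], e⟩

/-- Runs versus functional descriptions. -/
lemma run_iff {M : ACV Q d} {σ : FSeq Q d} {C C' : Conf Q d} :
    Run M C σ C' ↔ Ok M C.1 σ C'.1 ∧ AdmM C.2 σ ∧ C'.2 = finM C.2 σ := by
  induction σ generalizing C with
  | nil =>
    constructor
    · intro h; cases h with
      | nil _ h => exact ⟨rfl, h, rfl⟩
    · rintro ⟨h1, h2, h3⟩
      have : C' = C := Prod.ext h1.symm h3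
      subst this; exact Run.nil _ h2
  | cons a σ ih =>
    constructor
    · intro h; cases h with
      | cons hs hr =>
        obtain ⟨s1, s2, s3, s4, s5, s6, s7, s8⟩ := hs
        obtain ⟨r1, r2, r3⟩ := ih.1 hr
        rw [s5] at r1
        rw [s8] at r2 r3
        exact ⟨⟨s1, s2, s3, s4, r1⟩, ⟨s6, r2⟩, r3⟩
    · rintro ⟨⟨s1, s2, s3, s4, r1⟩, ⟨s6, r2⟩, r3⟩
      have h0 : NonNeg (nxt a C.2) := by cases σ with
        | nil => exact r2
        | cons => exact r2.1
      exact Run.cons (C' := (a.2.tgt, nxt a C.2)) ⟨s1, s2, s3, s4, rfl, s6, h0, rfl⟩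
        (ih.2 ⟨r1, r2, r3⟩)

lemma Adm1.nonneg {x : Fin d} {s : ℚ} {σ : FSeq Q d} (h : Adm1 x s σ) : 0 ≤ s := by
  cases σ with
  | nil => exact h
  | cons => exact h.1

lemma runX_imp {M : ACV Q d} {X : Set (Fin d)} {p q} {u w : Vec d} {σ : FSeq Q d}
    (h : RunX M X p u σ q w) :
    Ok M p σ q ∧ ∀ x ∈ X, Adm1 x (u x) σ ∧ w x = u x + eff σ x := by
  induction h with
  | nil p u v h => exact ⟨rfl, fun x hx => ⟨(h x hx).1, by simp [(h x hx).2]⟩⟩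
  | cons hs _ ih =>
    obtain ⟨s1, s2, s3, s4, s5, s6, s7, s8⟩ := hs
    refine ⟨⟨s1, s2, s3, s4, s5 ▸ ih.1⟩, fun x hx => ?_⟩
    have := ih.2 x hx
    rw [s8 x hx] at this
    refine ⟨⟨s6 x hx, this.1⟩, ?_⟩
    rw [this.2, eff_cons]; simp [castVec]; ring

lemma runX_of {M : ACV Q d} {X : Set (Fin d)} {p q} {u w : Vec d} {σ : FSeq Q d}
    (h : Ok M p σ q) (h2 : ∀ x ∈ X, Adm1 x (u x) σ ∧ w x = u x + eff σ x) :
    RunX M X p u σ q w := by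
  induction σ generalizing p u with
  | nil => cases h; exact RunX.nil _ _ _ (fun x hx => ⟨(h2 x hx).1, by simp [(h2 x hx).2]⟩)
  | cons a σ ih =>
    obtain ⟨s1, s2, s3, s4, s5⟩ := h
    refine RunX.cons (w := fun x => u x + a.1 * (a.2.upd x : ℚ)) (r := a.2.tgt)
      ⟨s1, s2, s3, s4, rfl, fun x hx => (h2 x hx).1.1, fun x hx => (h2 x hx).1.2.nonneg,
        fun x hx => rfl⟩ (ih s5 fun x hx => ⟨(h2 x hx).1.2, ?_⟩)
    rw [(h2 x hx).2, eff_cons]; ring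

lemma Adm1.mono {x : Fin d} {s s' : ℚ} {σ : FSeq Q d} (h : Adm1 x s σ) (hs : s ≤ s') :
    Adm1 x s' σ := by
  induction σ generalizing s s' with
  | nil => exact h.trans hs
  | cons a σ ih => exact ⟨h.1.trans hs, ih h.2 (by linarith)⟩

lemma Adm1.append {x : Fin d} {s : ℚ} {σ τ : FSeq Q d} (h : Adm1 x s σ)
    (h' : Adm1 x (s + eff σ x) τ) : Adm1 x s (σ ++ τ) := by
  induction σ generalizing s with
  | nil => simpa using h'
  | cons a σ ih => exact ⟨h.1, ih h.2 (by rw [eff_cons, ← add_assoc] at h'; exact h')⟩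

lemma adm1_of_bd {x : Fin d} {s : ℚ} {σ : FSeq Q d} (h : bd σ x ≤ s) : Adm1 x s σ := by
  induction σ generalizing s with
  | nil => exact h
  | cons a σ ih =>
    rw [bd_cons] at h
    have := bd_nonneg σ x
    have := neg_abs_le (a.1 * (a.2.upd x : ℚ))
    have := abs_nonneg (a.1 * (a.2.upd x : ℚ))
    exact ⟨by linarith, ih (by linarith)⟩

lemma nxt_apply (a : ℚ × Trans Q d) (s : Vec d) (x) :
    nxt a s x = ∑ y, (a.2.mat x y : ℚ) * s y + a.1 * (a.2.upd x : ℚ) := by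
  simp [nxt, castMat, castVec, Matrix.mulVec, dotProduct]

lemma self_ge {A : Mat d} (hA : SelfLoopMat A) (x) : (1 : ℚ) ≤ A x x := by
  have h1 := hA.1 x x
  have h2 := hA.2 x
  exact_mod_cast (by omega : 1 ≤ A x x)

lemma mv_nonneg {A : Mat d} (hA : SelfLoopMat A) {s : Vec d} (hs : NonNeg s) (x y) :
    0 ≤ (A x y : ℚ) * s y :=
  mul_nonneg (by exact_mod_cast hA.1 x y) (hs y)

lemma mv_ge {A : Mat d} (hA : SelfLoopMat A) {s : Vec d} (hs : NonNeg s) (x) :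
    s x ≤ ∑ y, (A x y : ℚ) * s y := by
  have h := Finset.single_le_sum (f := fun y => (A x y : ℚ) * s y)
    (fun y _ => mv_nonneg hA hs x y) (Finset.mem_univ x)
  refine le_trans ?_ h
  have := self_ge hA x
  have := hs x
  nlinarith

lemma mv_pump {t : Trans Q d} (hA : SelfLoopMat t.mat) {s : Vec d} (hs : NonNeg s) {x y}
    (hy : y ∈ suppPump t x) :
    s x + s y ≤ ∑ y, (t.mat x y : ℚ) * s y := by
  have hx := self_ge hA x
  have h1 := hs x
  have h2 := hs y
  rcases hy with ⟨hne, h⟩ | ⟨rfl, h⟩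
  · have h' : (1 : ℚ) ≤ t.mat x y := by exact_mod_cast h
    have := Finset.sum_le_sum_of_subset_of_nonneg (s := {x, y}) (Finset.subset_univ _)
      (f := fun y => (t.mat x y : ℚ) * s y) (fun y _ _ => mv_nonneg hA hs x y)
    rw [Finset.sum_pair (Ne.symm hne)] at this
    nlinarith
  · have h' : (2 : ℚ) ≤ t.mat y y := by exact_mod_cast h
    have h := Finset.single_le_sum (f := fun z => (t.mat y z : ℚ) * s z)
      (fun z _ => mv_nonneg hA hs y z) (Finset.mem_univ y)
    nlinarith

lemma nxt_ge {a : ℚ × Trans Q d} (hA : SelfLoopMat a.2.mat) {s : Vec d} (hs : NonNeg s) (x) :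
    s x + a.1 * (a.2.upd x : ℚ) ≤ nxt a s x := by
  rw [nxt_apply]; linarith [mv_ge hA hs x]

lemma finM_append (s : Vec d) (σ τ : FSeq Q d) : finM s (σ ++ τ) = finM (finM s σ) τ := by
  induction σ generalizing s with
  | nil => rfl
  | cons a σ ih => exact ih _

lemma AdmM.append {s : Vec d} {σ τ : FSeq Q d} (h : AdmM s σ) (h' : AdmM (finM s σ) τ) :
    AdmM s (σ ++ τ) := by
  induction σ generalizing s with
  | nil => exact h'
  | cons a σ ih => exact ⟨h.1, ih h.2 h'⟩

lemma adm_lift {σ : FSeq Q d} {s : Vec d} (hT : ∀ a ∈ σ, SelfLoopMat a.2.mat)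
    (h : ∀ x, Adm1 x (s x) σ) : AdmM s σ ∧ ∀ x, s x + eff σ x ≤ finM s σ x := by
  induction σ generalizing s with
  | nil => exact ⟨h, fun x => by simp [finM]⟩
  | cons a σ ih =>
    have h0 : NonNeg s := fun x => (h x).1
    have h1 := nxt_ge (hT a (by simp)) h0
    obtain ⟨i1, i2⟩ := ih (s := nxt a s) (fun b hb => hT b (by simp [hb]))
      (fun x => (h x).2.mono (h1 x))
    refine ⟨⟨h0, i1⟩, fun x => ?_⟩
    have := i2 x
    have := h1 x
    rw [eff_cons]; show _ ≤ finM (nxt a s) σ x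
    linarith

lemma pump_once {σ : FSeq Q d} {s : Vec d} (hT : ∀ a ∈ σ, SelfLoopMat a.2.mat)
    (h : ∀ x, bd σ x ≤ s x) {a} (ha : a ∈ σ) {x y} (hy : y ∈ suppPump a.2 x) :
    s x + s y - bd σ x - bd σ y ≤ finM s σ x := by
  obtain ⟨σ₁, σ₂, rfl⟩ := List.append_of_mem ha
  simp only [bd_append, bd_cons] at h ⊢
  have hb1 := bd_nonneg σ₁
  have hb2 := bd_nonneg σ₂
  have ab := fun x => abs_nonneg (a.1 * (a.2.upd x : ℚ))
  have ab' := fun x => neg_abs_le (a.1 * (a.2.upd x : ℚ))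
  have e1 := fun x => abs_le.1 (abs_eff_le σ₁ x)
  have e2 := fun x => abs_le.1 (abs_eff_le σ₂ x)
  obtain ⟨-, i2⟩ := adm_lift (σ := σ₁) (s := s) (fun b hb => hT b (by simp [hb]))
    (fun x => adm1_of_bd (by linarith [h x, hb2 x, ab x]))
  have h1 : ∀ x, s x - bd σ₁ x ≤ finM s σ₁ x := fun x => by linarith [i2 x, (e1 x).1]
  have hn : NonNeg (finM s σ₁) := fun x => by linarith [h1 x, hb2 x, ab x, h x]
  have hA := hT a (by simp)
  have h2 := nxt_ge hA hn
  have h3 := mv_pump hA hn hy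
  obtain ⟨-, j2⟩ := adm_lift (σ := σ₂) (s := nxt a (finM s σ₁)) (fun b hb => hT b (by simp [hb]))
    (fun x => adm1_of_bd (by linarith [h x, h2 x, h1 x, ab' x]))
  rw [finM_append]
  show _ ≤ finM (nxt a (finM s σ₁)) σ₂ x
  have := j2 x
  rw [nxt_apply] at this
  linarith [h1 x, h1 y, ab' x, (e2 x).1, hb2 y, ab y]

lemma np_lemma {σ : FSeq Q d} {s : Vec d} {x : Fin d} (hT : ∀ a ∈ σ, SelfLoopMat a.2.mat)
    (h : AdmM s σ)
    (hnp : ∀ σ₁ a σ₂, σ = σ₁ ++ a :: σ₂ → ∀ y ∈ suppPump a.2 x, finM s σ₁ y ≤ 0) :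
    Adm1 x (s x) σ ∧ finM s σ x = s x + eff σ x := by
  induction σ generalizing s with
  | nil => exact ⟨h x, by simp [finM]⟩
  | cons a σ ih =>
    obtain ⟨h0, h1⟩ := h
    have hA := hT a (by simp)
    have hsum : ∑ y, (a.2.mat x y : ℚ) * s y = s x := by
      rw [Finset.sum_eq_single x]
      · by_cases hx : 1 < a.2.mat x x
        · have := hnp [] a σ rfl x (Or.inr ⟨rfl, hx⟩)
          have : s x = 0 := le_antisymm this (h0 x)
          simp [this]
        · have h1 := hA.1 x x
          have h2 := hA.2 x
          have : a.2.mat x x = 1 := by omega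
          simp [this]
      · intro y _ hy
        by_cases hx : 0 < a.2.mat x y
        · have := hnp [] a σ rfl y (Or.inl ⟨hy, hx⟩)
          have : s y = 0 := le_antisymm this (h0 y)
          simp [this]
        · have h1 := hA.1 x y
          have : a.2.mat x y = 0 := by omega
          simp [this]
      · simp
    have hn : nxt a s x = s x + a.1 * (a.2.upd x : ℚ) := by rw [nxt_apply, hsum]
    obtain ⟨i1, i2⟩ := ih (s := nxt a s) (fun b hb => hT b (by simp [hb])) h1
      (fun σ₁ b σ₂ e y hy => hnp (a :: σ₁) b σ₂ (by simp [e]) y hy)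
    rw [hn] at i1 i2
    refine ⟨⟨h0 x, i1⟩, ?_⟩
    rw [eff_cons]; show finM (nxt a s) σ x = _
    rw [i2]; ring

/-- small positive perturbations -/
lemma ev_small (a b : ℚ) (h : 0 < a) : ∀ᶠ c in nhdsWithin (0 : ℚ) (Set.Ioi 0), 0 < a + c * b := by
  have : Filter.Tendsto (fun c : ℚ => a + c * b) (nhds 0) (nhds (a + 0 * b)) :=
    Continuous.tendsto (by fun_prop) 0
  rw [zero_mul, add_zero] at this
  exact nhdsWithin_le_nhds (this.eventually (lt_mem_nhds h))

lemma ev_le (k : ℚ) (h : 0 < k) : ∀ᶠ c in nhdsWithin (0 : ℚ) (Set.Ioi 0), c ≤ k := by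
  filter_upwards [ev_small k (-1) h] with c hc; linarith

lemma ev_pos : ∀ᶠ c in nhdsWithin (0 : ℚ) (Set.Ioi 0), 0 < c := self_mem_nhdsWithin

lemma fwd {κ : ℚ} (hκ : 0 < κ) {π : FSeq Q d} {s s₀ : Vec d} (hT : ∀ a ∈ π, SelfLoopMat a.2.mat)
    (hp : ∀ a ∈ π, 0 < a.1)
    (h : AdmM s₀ π) (hs : NonNeg s) (hss : ∀ x, 0 < s₀ x → 0 < s x) :
    ∃ φ, Sc κ π φ ∧ AdmM s φ ∧ (∀ x, 0 < s x → 0 < finM s φ x) ∧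
      (∀ a ∈ π, ∀ x, a.2.upd x ≠ 0 → 0 < finM s φ x) ∧
      (∀ π₁ π₂, π = π₁ ++ π₂ → ∀ x, 0 < finM s₀ π₁ x → 0 < finM s φ x) ∧
      (∀ x, s x + eff φ x ≤ finM s φ x) := by
  induction π generalizing s s₀ with
  | nil =>
    refine ⟨[], List.Forall₂.nil, hs, fun x hx => hx, by simp, ?_, by simp [finM]⟩
    intro π₁ π₂ e x hx
    have : π₁ = [] := by simp at e; exact e.1
    subst this; exact hss x hx
  | cons a π ih =>
    obtain ⟨h0, h1⟩ := h
    have hA := hT a (by simp)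
    have ha := hp a (by simp)
    have h1n : NonNeg (nxt a s₀) := by
      cases π with
      | nil => exact h1
      | cons => exact h1.1
    have mvpos : ∀ x, 0 < ∑ y, (a.2.mat x y : ℚ) * s₀ y → 0 < ∑ y, (a.2.mat x y : ℚ) * s y := by
      intro x hx
      obtain ⟨y, -, hy⟩ := Finset.exists_lt_of_sum_lt (s := Finset.univ) (f := fun _ => (0 : ℚ))
        (by simpa using hx)
      have h2 : 0 < (a.2.mat x y : ℚ) := by
        have : 0 ≤ (a.2.mat x y : ℚ) := by exact_mod_cast hA.1 x y
        rcases this.eq_or_lt with h | h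
        · rw [← h] at hy; simp at hy
        · exact h
      have h3 : 0 < s₀ y := by
        by_contra hc
        have := le_antisymm (not_lt.1 hc) (h0 y)
        rw [this] at hy; simp at hy
      exact lt_of_lt_of_le (mul_pos h2 (hss y h3))
        (Finset.single_le_sum (f := fun y => (a.2.mat x y : ℚ) * s y)
          (fun y _ => mv_nonneg hA hs x y) (Finset.mem_univ y))
    have key : ∀ᶠ c in nhdsWithin (0 : ℚ) (Set.Ioi 0), (0 < c ∧ c ≤ κ * a.1) ∧ ∀ x,
        0 < ∑ y, (a.2.mat x y : ℚ) * s y → 0 < ∑ y, (a.2.mat x y : ℚ) * s y + c * (a.2.upd x : ℚ) := by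
      refine (ev_pos.and (ev_le _ (by positivity))).and (Filter.eventually_all.2 fun x => ?_)
      by_cases hx : 0 < ∑ y, (a.2.mat x y : ℚ) * s y
      · filter_upwards [ev_small _ (a.2.upd x : ℚ) hx] with c hc _ using hc
      · exact Filter.Eventually.of_forall fun c h => absurd h hx
    obtain ⟨c, ⟨c0, c1⟩, c2⟩ := key.exists
    set b : ℚ × Trans Q d := (c, a.2) with hb
    have hnx : ∀ x, nxt b s x = ∑ y, (a.2.mat x y : ℚ) * s y + c * (a.2.upd x : ℚ) :=
      fun x => nxt_apply b s x
    have hmv0 : ∀ x, 0 ≤ ∑ y, (a.2.mat x y : ℚ) * s y :=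
      fun x => (hs x).trans (mv_ge hA hs x)
    have hup : ∀ x, 0 < (a.2.upd x : ℚ) → 0 < nxt b s x := fun x hx => by
      rw [hnx]; have := hmv0 x; positivity
    have hmv : ∀ x, 0 < ∑ y, (a.2.mat x y : ℚ) * s y → 0 < nxt b s x := fun x hx => by
      rw [hnx]; exact c2 x hx
    have hdn : ∀ x, (a.2.upd x : ℚ) < 0 → 0 < nxt b s x := fun x hx => by
      apply hmv; apply mvpos
      have := h1n x
      rw [nxt_apply] at this
      nlinarith
    have hsx : ∀ x, 0 < s x → 0 < nxt b s x := fun x hx => hmv x (hx.trans_le (mv_ge hA hs x))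
    have hbn : NonNeg (nxt b s) := fun x => by
      rcases lt_trichotomy (a.2.upd x : ℚ) 0 with h | h | h
      · exact (hdn x h).le
      · rw [hnx, h]; simpa using hmv0 x
      · exact (hup x h).le
    obtain ⟨φ, i1, i2, i3, i4, i5, i6⟩ := ih (s := nxt b s) (s₀ := nxt a s₀)
      (fun b hb => hT b (by simp [hb])) (fun b hb => hp b (by simp [hb])) h1 hbn (by
        intro x hx
        rcases lt_or_ge 0 (a.2.upd x : ℚ) with h | h
        · exact hup x h
        · apply hmv; apply mvpos
          rw [nxt_apply] at hx
          nlinarith)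
    refine ⟨b :: φ, List.Forall₂.cons ⟨rfl, c0, c1⟩ i1, ⟨hs, i2⟩, fun x hx => i3 x (hsx x hx),
      ?_, ?_, ?_⟩
    · intro a' ha' x hx
      rcases List.mem_cons.1 ha' with rfl | h'
      · apply i3
        have hx' : (a'.2.upd x : ℚ) ≠ 0 := by exact_mod_cast hx
        rcases lt_or_gt_of_ne hx' with h | h
        · exact hdn x h
        · exact hup x h
      · exact i4 a' h' x hx
    · intro π₁ π₂ e x hx
      cases π₁ with
      | nil => exact i3 x (hsx x (hss x hx))
      | cons a' π₁ =>
        simp only [List.cons_append, List.cons.injEq] at e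
        obtain ⟨rfl, e⟩ := e
        exact i5 π₁ π₂ e x hx
    · intro x
      have := i6 x
      have h7 := nxt_ge (a := b) hA hs x
      rw [eff_cons]; show _ ≤ finM (nxt b s) φ x
      linarith

lemma bwd {κ : ℚ} (hκ : 0 < κ) {π : FSeq Q d} {s : Vec d} (hp : ∀ a ∈ π, 0 < a.1)
    (h : ∀ x, Adm1 x (s x) π) :
    ∃ ρ, Sc κ π ρ ∧ (∀ x, Adm1 x (s x + eff π x - eff ρ x) ρ) ∧
      (∀ x, 0 < s x + eff π x → 0 < s x + eff π x - eff ρ x) ∧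
      (∀ a ∈ π, ∀ x, a.2.upd x ≠ 0 → 0 < s x + eff π x - eff ρ x) := by
  induction π generalizing s with
  | nil => exact ⟨[], List.Forall₂.nil, fun x => by simpa using h x, by simp, by simp⟩
  | cons a π ih =>
    have ha := hp a (by simp)
    obtain ⟨ρ, i1, i2, i3, i4⟩ := ih (s := fun x => s x + a.1 * (a.2.upd x : ℚ))
      (fun b hb => hp b (by simp [hb])) (fun x => (h x).2)
    have he : ∀ x, s x + a.1 * (a.2.upd x : ℚ) + eff π x = s x + eff (a :: π) x := fun x => by
      rw [eff_cons]; ring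
    simp only [he] at i2 i3 i4
    have key : ∀ᶠ c in nhdsWithin (0 : ℚ) (Set.Ioi 0), (0 < c ∧ c ≤ κ * a.1) ∧ ∀ x,
        0 < s x + eff (a :: π) x - eff ρ x →
          0 < s x + eff (a :: π) x - eff ρ x + c * (-(a.2.upd x : ℚ)) := by
      refine (ev_pos.and (ev_le _ (by positivity))).and (Filter.eventually_all.2 fun x => ?_)
      by_cases hx : 0 < s x + eff (a :: π) x - eff ρ x
      · filter_upwards [ev_small _ (-(a.2.upd x : ℚ)) hx] with c hc _ using hc
      · exact Filter.Eventually.of_forall fun c h => absurd h hx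
    obtain ⟨c, ⟨c0, c1⟩, c2⟩ := key.exists
    have hE : ∀ x, s x + eff (a :: π) x - eff ((c, a.2) :: ρ) x
        = s x + eff (a :: π) x - eff ρ x + c * (-(a.2.upd x : ℚ)) := fun x => by
      rw [eff_cons (c, a.2)]; ring
    have hw : ∀ x, 0 ≤ s x + eff (a :: π) x - eff ρ x := fun x => (i2 x).nonneg
    have ht : ∀ x, a.2.upd x ≠ 0 →
        0 < s x + eff (a :: π) x - eff ρ x + c * (-(a.2.upd x : ℚ)) := by
      intro x hx
      have hx' : (a.2.upd x : ℚ) ≠ 0 := by exact_mod_cast hx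
      rcases lt_or_gt_of_ne hx' with h' | h'
      · have := hw x; nlinarith
      · apply c2
        by_cases hex : ∃ b ∈ π, b.2.upd x ≠ 0
        · obtain ⟨b, hb, hbx⟩ := hex
          exact i4 b hb x hbx
        · push Not at hex
          apply i3
          rw [eff_cons, eff_zero hex]
          have := (h x).1
          nlinarith [mul_pos ha h']
    refine ⟨(c, a.2) :: ρ, List.Forall₂.cons ⟨rfl, c0, c1⟩ i1, fun x => ?_, fun x hx => ?_, ?_⟩
    · refine ⟨?_, ?_⟩
      · rw [hE]
        by_cases hx : a.2.upd x = 0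
        · rw [hx]; simpa using hw x
        · exact (ht x hx).le
      · rw [hE]; convert i2 x using 1; simp only; ring
    · rw [hE]; exact c2 x (i3 x hx)
    · intro b hb x hx
      rw [hE]
      rcases List.mem_cons.1 hb with rfl | h'
      · exact ht x hx
      · exact c2 x (i4 b h' x hx)

def rep (σ : FSeq Q d) : ℕ → FSeq Q d
  | 0 => []
  | n + 1 => rep σ n ++ σ

lemma rep_ok {M : ACV Q d} {p} {σ : FSeq Q d} (h : Ok M p σ p) (n) : Ok M p (rep σ n) p := by
  induction n with
  | zero => rfl
  | succ n ih => exact ih.append h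
lemma rep_eff (σ : FSeq Q d) (n x) : eff (rep σ n) x = n * eff σ x := by
  induction n with
  | zero => simp [rep]
  | succ n ih => rw [rep, eff_append, ih]; push_cast; ring
lemma rep_par (σ : FSeq Q d) (n t) : par (rep σ n) t = n * par σ t := by
  induction n with
  | zero => simp [rep]
  | succ n ih => rw [rep, par_append, ih]; push_cast; ring
lemma rep_mem {σ : FSeq Q d} {n a} (h : a ∈ rep σ n) : a ∈ σ := by
  induction n with
  | zero => simp [rep] at h
  | succ n ih =>
    rcases List.mem_append.1 h with h | h
    · exact ih h
    · exact h

/-- straight line between two positive points -/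
lemma loop {M : ACV Q d} {p} {σ : FSeq Q d} (hok : Ok M p σ p) {s : Vec d}
    (hs : NonNeg s)
    (h1 : ∀ a ∈ σ, ∀ x, a.2.upd x ≠ 0 → 0 < s x)
    (h2 : ∀ a ∈ σ, ∀ x, a.2.upd x ≠ 0 → 0 < s x + eff σ x) :
    ∃ τ, Ok M p τ p ∧ (∀ x, eff τ x = eff σ x) ∧ ∀ x, Adm1 x (s x) τ := by
  have key : ∀ᶠ c in nhdsWithin (0 : ℚ) (Set.Ioi 0), ∀ x,
      c * bd σ x ≤ s x ∧ c * bd σ x ≤ s x + eff σ x := by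
    refine Filter.eventually_all.2 fun x => ?_
    by_cases hex : ∃ b ∈ σ, b.2.upd x ≠ 0
    · obtain ⟨b, hb, hbx⟩ := hex
      filter_upwards [ev_small _ (-bd σ x) (h1 b hb x hbx), ev_small _ (-bd σ x) (h2 b hb x hbx)]
        with c hc hc'
      constructor <;> linarith
    · push Not at hex
      refine Filter.Eventually.of_forall fun c => ?_
      rw [bd_zero hex, eff_zero hex]; simpa using hs x
  have ht : Filter.Tendsto (fun n : ℕ => (1 : ℚ) / (n + 1)) Filter.atTop
      (nhdsWithin (0 : ℚ) (Set.Ioi 0)) := by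
    refine tendsto_nhdsWithin_iff.2 ⟨tendsto_one_div_add_atTop_nhds_zero_nat,
      Filter.Eventually.of_forall fun n => ?_⟩
    show (0 : ℚ) < 1 / (n + 1); positivity
  obtain ⟨n, hn⟩ := (ht.eventually key).exists
  set c : ℚ := 1 / (n + 1) with hc
  have c0 : 0 < c := by positivity
  have hcn : ((n + 1 : ℕ) : ℚ) * c = 1 := by rw [hc]; push_cast; field_simp
  have c1 : c ≤ 1 := by
    rw [← hcn]; push_cast; nlinarith [(Nat.cast_nonneg n : (0 : ℚ) ≤ n)]
  refine ⟨rep (smap (fun _ => c) σ) (n + 1), rep_ok (hok.smap fun a _ => ⟨c0, c1⟩) _, ?_, ?_⟩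
  · intro x; rw [rep_eff, eff_smap, ← mul_assoc, hcn, one_mul]
  · intro x
    have : ∀ k : ℕ, k ≤ n + 1 → Adm1 x (s x) (rep (smap (fun _ => c) σ) k) := by
      intro k
      induction k with
      | zero => intro _; exact hs x
      | succ k ih =>
        intro hk
        refine (ih (by omega)).append (adm1_of_bd ?_)
        rw [bd_smap _ c0.le, rep_eff, eff_smap]
        obtain ⟨e1, e2⟩ := hn x
        have hk1 : (k : ℚ) * c ≤ 1 := by
          rw [← hcn]; gcongr; omega
        have hk0 : 0 ≤ (k : ℚ) * c := by positivity
        nlinarith [mul_nonneg hk0 (sub_nonneg.2 e2), mul_nonneg (sub_nonneg.2 hk1) (sub_nonneg.2 e1)]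
    exact this _ le_rfl

/-- pumping -/
lemma pumpK {σ : FSeq Q d} {s : Vec d} (hT : ∀ a ∈ σ, SelfLoopMat a.2.mat) (K : ℕ)
    (h : ∀ x, 2 * K * bd σ x ≤ s x) (k : ℕ) (hk : k ≤ K) (hs : NonNeg s) :
    AdmM s (rep σ k) ∧ (∀ x, s x + k * eff σ x ≤ finM s (rep σ k) x) ∧
    (∀ a ∈ σ, ∀ x, ∀ y ∈ suppPump a.2 x,
      s x - k * bd σ x + k * (s y / 2 - bd σ y) ≤ finM s (rep σ k) x) := by
  induction k with
  | zero => exact ⟨hs, by simp [finM, rep], by simp [finM, rep]⟩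
  | succ k ih =>
    obtain ⟨i1, i2, i3⟩ := ih (by omega)
    have hkK : (k : ℚ) + 1 ≤ K := by exact_mod_cast hk
    have hk0 : (0 : ℚ) ≤ k := Nat.cast_nonneg k
    have e1 := fun x => abs_le.1 (abs_eff_le σ x)
    have hb := bd_nonneg σ
    have hmid : ∀ x, s x / 2 + bd σ x ≤ finM s (rep σ k) x := fun x => by
      nlinarith [i2 x, h x, mul_le_mul_of_nonneg_right hkK (hb x),
        mul_le_mul_of_nonneg_left (e1 x).1 hk0]
    have hbd : ∀ x, bd σ x ≤ finM s (rep σ k) x := fun x => by linarith [hmid x, hs x]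
    obtain ⟨j1, j2⟩ := adm_lift hT (fun x => adm1_of_bd (hbd x))
    refine ⟨i1.append j1, ?_, ?_⟩
    · intro x; rw [rep, finM_append]; push_cast; linarith [j2 x, i2 x]
    · intro a ha x y hy
      rw [rep, finM_append]
      have := pump_once hT hbd ha hy
      push_cast
      linarith [i3 a ha x y hy, hmid y, hb y]

lemma AdmM.fin_nonneg {s : Vec d} {σ : FSeq Q d} (h : AdmM s σ) : NonNeg (finM s σ) := by
  induction σ generalizing s with
  | nil => exact h
  | cons a σ ih => exact ih h.2

lemma cover_imp {M : ACV Q d} (hM : SelfLoopVASS M) {p : Q} {u v : Vec d}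
    (h : Covers M (p, u) (p, v)) :
    ∃ (X : Set (Fin d)) (w : Vec d) (π' πfwd : FSeq Q d),
        NonNeg w ∧ v ≤ w ∧
        RunX M X p u π' p w ∧
        (∃ z : Vec d, Run M (p, u) πfwd (p, z)) ∧
        (∀ x : Fin d, x ∉ X → Pumps M (p, u) πfwd x) ∧
        seqSupp π' = seqSupp πfwd := by
  obtain ⟨w, hvw, π, hr⟩ := h
  obtain ⟨hok, hadm, hfin⟩ := run_iff.1 hr
  simp only at hok hadm hfin hvw
  refine ⟨{x | ¬ Pumps M (p, u) π x}, w, π, π, hfin ▸ hadm.fin_nonneg, hvw, ?_, ⟨w, hr⟩,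
    fun x hx => not_not.1 hx, rfl⟩
  refine runX_of hok fun x hx => ?_
  rw [hfin]
  refine np_lemma (fun a ha => hM _ (hok.mem a ha).1) hadm ?_
  intro σ₁ a σ₂ e y hy
  by_contra hc
  apply hx
  rw [e] at hr
  have split : ∀ (σ₁ : FSeq Q d) (C : Conf Q d), Run M C (σ₁ ++ a :: σ₂) (p, w) →
      ∃ C₁ C₂, Run M C σ₁ C₁ ∧ Step M C₁ a.1 a.2 C₂ := by
    intro σ₁
    induction σ₁ with
    | nil =>
      intro C hC
      cases hC with
      | cons hs _ => exact ⟨C, _, Run.nil _ hs.2.2.2.2.2.1, hs⟩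
    | cons b σ₁ ih =>
      intro C hC
      cases hC with
      | cons hs hr =>
        obtain ⟨C₁, C₂, h1, h2⟩ := ih _ hr
        exact ⟨C₁, C₂, Run.cons hs h1, h2⟩
  obtain ⟨C₁, C₂, h1, h2⟩ := split σ₁ _ hr
  refine ⟨a.2, σ₁, a.1, σ₂, C₁, C₂, e, h1, h2, y, hy, ?_⟩
  rw [(run_iff.1 h1).2.2]
  exact not_le.1 hc

lemma imp_cover {M : ACV Q d} (hM : SelfLoopVASS M) {p : Q} {u v w z : Vec d} {X : Set (Fin d)}
    {π' π : FSeq Q d} (hu : NonNeg u) (hw : NonNeg w) (hvw : v ≤ w)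
    (hX : RunX M X p u π' p w) (hz : Run M (p, u) π (p, z))
    (hpump : ∀ x : Fin d, x ∉ X → Pumps M (p, u) π x)
    (hsupp : seqSupp π' = seqSupp π) : Covers M (p, u) (p, v) := by
  classical
  obtain ⟨hok', hX⟩ := runX_imp hX
  obtain ⟨hok, hadm, -⟩ := run_iff.1 hz
  simp only at hok hadm
  have hsl : ∀ {q r} {σ : FSeq Q d}, Ok M q σ r → ∀ a ∈ σ, SelfLoopMat a.2.mat :=
    fun h a ha => hM _ (h.mem a ha).1
  have hpo : ∀ {q r} {σ : FSeq Q d}, Ok M q σ r → ∀ a ∈ σ, 0 < a.1 :=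
    fun h a ha => (h.mem a ha).2.1
  have hTm : ∀ {q r} {σ : FSeq Q d}, Ok M q σ r → ∀ a ∈ σ, a.2 ∈ M.T :=
    fun h a ha => (h.mem a ha).1
  have s1 : ∀ a ∈ π', ∃ b ∈ π, b.2 = a.2 := fun a ha => by
    have : a.2 ∈ seqSupp π' := ⟨a.1, ha⟩
    rw [hsupp] at this
    obtain ⟨α, h⟩ := this
    exact ⟨_, h, rfl⟩
  have s2 : ∀ a ∈ π, ∃ b ∈ π', b.2 = a.2 := fun a ha => by
    have : a.2 ∈ seqSupp π := ⟨a.1, ha⟩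
    rw [← hsupp] at this
    obtain ⟨α, h⟩ := this
    exact ⟨_, h, rfl⟩
  -- scale of forward phase
  have key1 : ∀ᶠ c in nhdsWithin (0 : ℚ) (Set.Ioi 0), (0 < c ∧ c ≤ 1) ∧
      ∀ t ∈ M.T, c * par π t ≤ par π' t / 8 := by
    refine (ev_pos.and (ev_le _ one_pos)).and ((Filter.eventually_all_finset _).2 fun t _ => ?_)
    by_cases ht : ∃ a ∈ π, a.2 = t
    · obtain ⟨a, ha, rfl⟩ := ht
      obtain ⟨b, hb, e⟩ := s2 a ha
      have := par_pos (hpo hok') hb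
      rw [e] at this
      filter_upwards [ev_small (par π' a.2 / 8) (-par π a.2) (by linarith)] with c hc
      linarith
    · push Not at ht
      rw [par_not_mem ht]
      refine Filter.Eventually.of_forall fun c => ?_
      have := par_nonneg (hpo hok') t
      linarith
  obtain ⟨κ, ⟨κ0, κ1⟩, hκ⟩ := key1.exists
  obtain ⟨φ, f1, f2, f3, f4, f5, f6⟩ := fwd κ0 (hsl hok) (hpo hok) hadm hu (fun x hx => hx)
  have f7 := f1.ok κ1 hok
  set s0 := finM u φ with hs0
  have s0n : NonNeg s0 := f2.fin_nonneg
  have hy : ∀ x, x ∉ X → ∃ a ∈ π, ∃ y ∈ suppPump a.2 x, 0 < s0 y := by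
    intro x hx
    obtain ⟨t, π₁, α, π₂, C₁, C₂, e, r1, -, y, hy, hpos⟩ := hpump x hx
    refine ⟨(α, t), by simp [e], y, hy, f5 π₁ _ e y ?_⟩
    rw [(run_iff.1 r1).2.2] at hpos
    exact hpos
  have key2 : ∀ᶠ K : ℕ in Filter.atTop, ∀ x, x ∉ X → ∃ a ∈ π, ∃ y ∈ suppPump a.2 x,
      w x + 2 * bd π' x ≤ (K - 1) * (s0 y / 2) := by
    refine Filter.eventually_all.2 fun x => ?_
    by_cases hx : x ∈ X
    · exact Filter.Eventually.of_forall fun _ h => absurd hx h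
    obtain ⟨a, ha, y, hy, hpos⟩ := hy x hx
    filter_upwards [(tendsto_natCast_atTop_atTop (R := ℚ)).eventually_ge_atTop
      ((w x + 2 * bd π' x) / (s0 y / 2) + 1)] with K hK _
    refine ⟨a, ha, y, hy, ?_⟩
    rw [← div_le_iff₀ (by linarith)]
    linarith
  obtain ⟨K, hK⟩ := key2.exists
  have key3 : ∀ᶠ c in nhdsWithin (0 : ℚ) (Set.Ioi 0), ((0 < c ∧ c ≤ 1) ∧ 0 < κ + c * (-K)) ∧
      ∀ x, 2 * K * (c * bd π x) ≤ s0 x := by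
    refine ((ev_pos.and (ev_le _ one_pos)).and (ev_small _ _ κ0)).and
      (Filter.eventually_all.2 fun x => ?_)
    by_cases hex : ∃ b ∈ π, b.2.upd x ≠ 0
    · obtain ⟨b, hb, hbx⟩ := hex
      filter_upwards [ev_small _ (-(2 * K * bd π x)) (f4 b hb x hbx)] with c hc
      linarith
    · push Not at hex
      rw [bd_zero hex]
      exact Filter.Eventually.of_forall fun c => by simpa using s0n x
  obtain ⟨c, ⟨⟨c0, c1⟩, cK⟩, hc⟩ := key3.exists
  set σ := smap (fun _ => c) π with hσ
  have σok : Ok M p σ p := hok.smap fun _ _ => ⟨c0, c1⟩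
  have σbd : ∀ x, bd σ x = c * bd π x := bd_smap c c0.le π
  obtain ⟨g1, g2, g3⟩ := pumpK (hsl σok) K (fun x => by rw [σbd]; exact hc x) K le_rfl s0n
  have Rok := rep_ok σok K
  set R := rep σ K with hR
  set sp := finM s0 R with hsp
  -- properties of sp
  have hKe : ∀ x, -(s0 x / 2) ≤ K * eff σ x := fun x => by
    have h1 := (abs_le.1 (abs_eff_le σ x)).1
    have h2 := hc x
    rw [← σbd] at h2
    nlinarith [mul_le_mul_of_nonneg_left h1 (Nat.cast_nonneg K : (0 : ℚ) ≤ K)]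
  have sp_half : ∀ x, s0 x / 2 ≤ sp x := fun x => by linarith [g2 x, hKe x]
  have spn : NonNeg sp := fun x => by linarith [sp_half x, s0n x]
  have sp_pos : ∀ a ∈ π', ∀ x, a.2.upd x ≠ 0 → 0 < sp x := fun a ha x hx => by
    obtain ⟨b, hb, e⟩ := s1 a ha
    have := f4 b hb x (by rw [e]; exact hx)
    linarith [sp_half x]
  have sp_big : ∀ x, x ∉ X → w x + 2 * bd π' x ≤ sp x := fun x hx => by
    obtain ⟨a, ha, y, hy, hle⟩ := hK x hx
    have h1 := g3 (c * a.1, a.2) (List.mem_map.2 ⟨a, ha, rfl⟩) x y hy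
    rw [σbd, σbd] at h1
    linarith [hc x, hc y, s0n x]
  set Φ := φ ++ R with hΦ
  have Φok : Ok M p Φ p := f7.append Rok
  have Φpar : ∀ t ∈ M.T, par Φ t ≤ par π' t / 4 := fun t ht => by
    rw [hΦ, par_append, hR, rep_par, hσ, par_smap]
    have h1 := f1.par_le t
    have h2 := hκ t ht
    have h3 := par_nonneg (hpo hok) t
    nlinarith
  have Φbd : ∀ x, bd Φ x ≤ bd π' x := fun x => by
    rw [bd_eq_par (hTm Φok) (hpo Φok), bd_eq_par (hTm hok') (hpo hok')]
    refine Finset.sum_le_sum fun t ht => mul_le_mul_of_nonneg_right ?_ (abs_nonneg _)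
    linarith [Φpar t ht, par_nonneg (hpo hok') t]
  have sp_u : ∀ x, u x + eff Φ x ≤ sp x := fun x => by
    rw [hΦ, eff_append, hR, rep_eff]; linarith [g2 x, f6 x]
  -- modified start
  set ut : Vec d := fun x => if x ∈ X then u x else w x + bd π' x with hut
  have ut_adm : ∀ x, Adm1 x (ut x) π' := fun x => by
    by_cases hx : x ∈ X
    · simp only [hut, hx, if_true]; exact (hX x hx).1
    · simp only [hut, hx, if_false]; exact adm1_of_bd (by linarith [hw x])
  have ut_w : ∀ x, w x ≤ ut x + eff π' x := fun x => by
    by_cases hx : x ∈ X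
    · simp only [hut, hx, if_true]; exact (hX x hx).2.le
    · simp only [hut, hx, if_false]; linarith [(abs_le.1 (abs_eff_le π' x)).1]
  have sp_ut : ∀ x, ut x + eff Φ x ≤ sp x := fun x => by
    by_cases hx : x ∈ X
    · simp only [hut, hx, if_true]; exact sp_u x
    · simp only [hut, hx, if_false]
      linarith [(abs_le.1 (abs_eff_le Φ x)).2, Φbd x, sp_big x hx]
  obtain ⟨ρ, r1, r2, -, r4⟩ := bwd (κ := 1 / 4) (by norm_num) (hpo hok') ut_adm
  have ρok : Ok M p ρ p := r1.ok (by norm_num) hok'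
  set m : Trans Q d → ℚ := fun t => 1 - (par Φ t + par ρ t) / par π' t with hm
  have hmid : ∀ a ∈ π', 0 < m a.2 ∧ m a.2 ≤ 1 := fun a ha => by
    have h0 := par_pos (hpo hok') ha
    have h1 := Φpar a.2 (hTm hok' a ha)
    have h2 := r1.par_le a.2
    have h3 := par_nonneg (hpo Φok) a.2
    have h4 := par_nonneg (hpo ρok) a.2
    have h5 : (par Φ a.2 + par ρ a.2) / par π' a.2 < 1 := by
      rw [div_lt_one h0]; linarith
    have h6 : 0 ≤ (par Φ a.2 + par ρ a.2) / par π' a.2 := by positivity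
    simp only [hm]
    constructor <;> linarith
  have mok : Ok M p (smap m π') p := hok'.smap hmid
  have meff : ∀ x, eff (smap m π') x = eff π' x - eff Φ x - eff ρ x := fun x => by
    rw [eff_eq_par (hTm mok), eff_eq_par (hTm hok'), eff_eq_par (hTm Φok), eff_eq_par (hTm ρok),
      ← Finset.sum_sub_distrib, ← Finset.sum_sub_distrib]
    refine Finset.sum_congr rfl fun t ht => ?_
    rw [par_smap, ← sub_mul, ← sub_mul]
    congr 1
    simp only [hm]
    by_cases h0 : par π' t = 0
    · have h1 := Φpar t ht
      have h2 := r1.par_le t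
      have h3 := par_nonneg (hpo Φok) t
      have h4 := par_nonneg (hpo ρok) t
      rw [h0] at h1 h2
      have h5 : par Φ t = 0 := by linarith
      have h6 : par ρ t = 0 := by linarith
      rw [h0, h5, h6]; simp
    · field_simp; ring
  obtain ⟨τ, t1, t2, t3⟩ := loop mok spn
    (fun a ha x hx => by
      obtain ⟨b, hb, e⟩ := smap_mem ha
      exact sp_pos b hb x (by rw [← e]; exact hx))
    (fun a ha x hx => by
      obtain ⟨b, hb, e⟩ := smap_mem ha
      have := r4 b hb x (by rw [← e]; exact hx)
      rw [meff]; linarith [sp_ut x])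
  obtain ⟨l1, l2⟩ := adm_lift (σ := τ ++ ρ) (s := sp) (hsl (t1.append ρok)) (fun x =>
    (t3 x).append ((r2 x).mono (by rw [t2, meff]; linarith [sp_ut x])))
  refine ⟨finM u (φ ++ (R ++ (τ ++ ρ))), ?_, φ ++ (R ++ (τ ++ ρ)), run_iff.2
    ⟨f7.append (Rok.append (t1.append ρok)), f2.append (g1.append l1), rfl⟩⟩
  intro x
  rw [finM_append, finM_append]
  have := l2 x
  rw [eff_append, t2, meff] at this
  have := hvw x
  show v x ≤ finM sp (τ ++ ρ) x
  linarith [sp_ut x, ut_w x]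

end helpers

/-- Coverability Characterization Lemma. -/
theorem coverability_characterization
    {Q : Type} [Fintype Q] {d : ℕ} (M : ACV Q d) (hM : SelfLoopVASS M)
    (p : Q) (u v : Vec d) (hu : NonNeg u) (hv : NonNeg v) :
    Covers M (p, u) (p, v) ↔
      ∃ (X : Set (Fin d)) (w : Vec d) (π' πfwd : FSeq Q d),
        NonNeg w ∧ v ≤ w ∧
        RunX M X p u π' p w ∧
        (∃ z : Vec d, Run M (p, u) πfwd (p, z)) ∧
        (∀ x : Fin d, x ∉ X → Pumps M (p, u) πfwd x) ∧
        seqSupp π' = seqSupp πfwd := by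
  constructor
  · exact cover_imp hM
  · rintro ⟨X, w, π', π, hw, hvw, hX, ⟨z, hz⟩, hpump, hsupp⟩
    exact imp_cover hM hu hw hvw hX hz hpump hsupp


end ACVASS
end

section
/- Let M = (Q,T) be a d-dimensional affine continuous VASS all of whose transition matrices are non-negative self-loop matrices, and let p(u), q(v) be configurations. Then p(u) covers q(v) if and only if there exist k ≥ 1, pairwise distinct states p₁,…,p_k ∈ Q and vectors u₁,u₁',…,u_k,u_k' ∈ ℚ₊^d such that p₁ = p, u₁ = u, p_k = q, u_k' ≥ v componentwise, for every i ∈ {1,…,k} the configuration p_i(u_i) covers p_i(u_i'), and for every i ∈ {1,…,k−1} there is a single step p_i(u_i') →^{αt} p_{i+1}(u_{i+1}) for some α ∈ (0,1] and transition t. -/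
namespace ACVASS

theorem Run.nn_left {Q : Type} {d : ℕ} {M : ACV Q d} {C C' : Conf Q d} {π : FSeq Q d}
    (h : Run M C π C') : NonNeg C.2 := by
  cases h with
  | nil _ h => exact h
  | cons hs _ => exact hs.2.2.2.2.2.1

theorem Run.append {Q : Type} {d : ℕ} {M : ACV Q d} {C C' C'' : Conf Q d} {π ρ : FSeq Q d}
    (h : Run M C π C') (h' : Run M C' ρ C'') : Run M C (π ++ ρ) C'' := by
  induction h with
  | nil _ _ => exact h'
  | cons hs _ ih => exact Run.cons hs (ih h')

theorem Reach.trans' {Q : Type} {d : ℕ} {M : ACV Q d} {C C' C'' : Conf Q d}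
    (h : Reach M C C') (h' : Reach M C' C'') : Reach M C C'' := by
  obtain ⟨π, h⟩ := h
  obtain ⟨ρ, h'⟩ := h'
  exact ⟨_, h.append h'⟩

theorem Step.reach {Q : Type} {d : ℕ} {M : ACV Q d} {C C' : Conf Q d} {α : ℚ} {t : Trans Q d}
    (h : Step M C α t C') : Reach M C C' :=
  ⟨_, Run.cons h (Run.nil _ h.2.2.2.2.2.2.1)⟩

theorem Step.mono {Q : Type} {d : ℕ} {M : ACV Q d} (hM : SelfLoopVASS M) {C C' : Conf Q d}
    {α : ℚ} {t : Trans Q d} (h : Step M C α t C') {u : Vec d} (hu : C.2 ≤ u) :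
    ∃ w, C'.2 ≤ w ∧ Step M (C.1, u) α t (C'.1, w) := by
  obtain ⟨ht, h0, h1, hs, htg, hn, hn', he⟩ := h
  have hle : C'.2 ≤ (castMat t.mat).mulVec u + α • castVec t.upd := by
    rw [he]
    intro i
    simp only [Pi.add_apply, add_le_add_iff_right, Matrix.mulVec, dotProduct]
    apply Finset.sum_le_sum
    intro j _
    apply mul_le_mul_of_nonneg_left (hu j)
    simp only [castMat, Matrix.map_apply]
    exact_mod_cast (hM t ht).1 i j
  exact ⟨_, hle, ht, h0, h1, hs, htg, fun i => (hn i).trans (hu i),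
    fun i => (hn' i).trans (hle i), rfl⟩

theorem Run.mono {Q : Type} {d : ℕ} {M : ACV Q d} (hM : SelfLoopVASS M) {C C' : Conf Q d}
    {π : FSeq Q d} (h : Run M C π C') {u : Vec d} (hu : C.2 ≤ u) :
    ∃ w, C'.2 ≤ w ∧ Run M (C.1, u) π (C'.1, w) := by
  induction h generalizing u with
  | nil C h => exact ⟨u, hu, Run.nil _ fun i => (h i).trans (hu i)⟩
  | cons hs _ ih =>
    obtain ⟨w, hw, hs'⟩ := hs.mono hM hu
    obtain ⟨w', hw', hr⟩ := ih hw
    exact ⟨w', hw', Run.cons hs' hr⟩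

theorem Covers.trans' {Q : Type} {d : ℕ} {M : ACV Q d} (hM : SelfLoopVASS M)
    {C C' C'' : Conf Q d} (h : Covers M C C') (h' : Covers M C' C'') : Covers M C C'' := by
  obtain ⟨w, hw, hr⟩ := h
  obtain ⟨x, hx, π, hr'⟩ := h'
  obtain ⟨y, hy, hr''⟩ := hr'.mono hM hw
  exact ⟨y, hx.trans hy, hr.trans' ⟨π, hr''⟩⟩

theorem Reach.covers {Q : Type} {d : ℕ} {M : ACV Q d} {C C' : Conf Q d}
    (h : Reach M C C') : Covers M C C' := ⟨C'.2, le_refl _, h⟩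

inductive Wit {Q : Type} {d : ℕ} (M : ACV Q d) : List Q → Conf Q d → Conf Q d → Prop
  | single {p : Q} {u u' : Vec d} : Reach M (p, u) (p, u') → Wit M [p] (p, u) (p, u')
  | cons {p r : Q} {u u' w : Vec d} {C : Conf Q d} {α : ℚ} {t : Trans Q d} {l : List Q} :
      Reach M (p, u) (p, u') → Step M (p, u') α t (r, w) → p ∉ l → Wit M l (r, w) C →
      Wit M (p :: l) (p, u) C

theorem Wit.shortcut {Q : Type} {d : ℕ} {M : ACV Q d} {l : List Q} {C C' : Conf Q d}
    (h : Wit M l C C') {p : Q} {u : Vec d} (hp : p ∈ l) (hr : Reach M (p, u) C) :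
    ∃ l', Wit M l' (p, u) C' := by
  induction h with
  | single h =>
    simp only [List.mem_singleton] at hp
    subst hp
    exact ⟨_, Wit.single (hr.trans' h)⟩
  | @cons p' r u₁ u' w C α t l h hs hn hw ih =>
    by_cases hpp : p = p'
    · subst hpp
      exact ⟨_, Wit.cons (hr.trans' h) hs hn hw⟩
    · have : p ∈ l := by simpa [hpp] using hp
      exact ih this ((hr.trans' h).trans' hs.reach)

theorem Run.wit {Q : Type} {d : ℕ} {M : ACV Q d} {C C' : Conf Q d} {π : FSeq Q d}
    (h : Run M C π C') : ∃ l, Wit M l C C' := by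
  induction h with
  | nil C h => exact ⟨_, Wit.single (p := C.1) (u := C.2) (u' := C.2) ⟨[], Run.nil _ h⟩⟩
  | @cons C C' C'' α t π hs _ ih =>
    obtain ⟨l, hl⟩ := ih
    by_cases hp : C.1 ∈ l
    · exact hl.shortcut (u := C.2) hp hs.reach
    · exact ⟨_, Wit.cons (p := C.1) (u := C.2) (u' := C.2) (r := C'.1) (w := C'.2)
        ⟨[], Run.nil _ hs.2.2.2.2.2.1⟩ hs hp hl⟩

theorem Wit.fn {Q : Type} {d : ℕ} {M : ACV Q d} {l : List Q} {C C' : Conf Q d}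
    (h : Wit M l C C') : ∃ (n : ℕ) (ps : ℕ → Q) (us us' : ℕ → Vec d),
      (∀ i j, i ≤ n → j ≤ n → ps i = ps j → i = j) ∧ (∀ i, i ≤ n → ps i ∈ l) ∧
      ps 0 = C.1 ∧ us 0 = C.2 ∧ ps n = C'.1 ∧ us' n = C'.2 ∧
      (∀ i, i ≤ n → Reach M (ps i, us i) (ps i, us' i)) ∧
      (∀ i, i < n → ∃ α t, Step M (ps i, us' i) α t (ps (i + 1), us (i + 1))) := by
  induction h with
  | @single p u u' h =>
    refine ⟨0, fun _ => p, fun _ => u, fun _ => u', ?_, ?_, rfl, rfl, rfl, rfl, ?_, ?_⟩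
    · intro i j hi hj _; omega
    · intro i _; simp
    · intro i _; exact h
    · intro i hi; omega
  | @cons p r u u' w C α t l h hs hn hw ih =>
    obtain ⟨n, ps, us, us', hinj, hmem, h1, h2, h3, h4, h5, h6⟩ := ih
    refine ⟨n + 1, fun i => Nat.casesOn i p ps, fun i => Nat.casesOn i u us,
      fun i => Nat.casesOn i u' us', ?_, ?_, rfl, rfl, h3, h4, ?_, ?_⟩
    · rintro (_ | i) (_ | j) hi hj he
      · rfl
      · exact absurd ((show p = ps j from he) ▸ hmem j (by omega)) hn
      · exact absurd ((show ps i = p from he) ▸ hmem i (by omega)) hn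
      · rw [hinj i j (by omega) (by omega) he]
    · rintro (_ | i) hi
      · simp
      · exact List.mem_cons_of_mem _ (hmem i (by omega))
    · rintro (_ | i) hi
      · exact h
      · exact h5 i (by omega)
    · rintro (_ | i) hi
      · refine ⟨α, t, ?_⟩
        show Step M (p, u') α t (ps 0, us 0)
        rw [h1, h2]
        exact hs
      · exact h6 i (by omega)

/-- characterization of coverability by witnesses. -/
theorem coverability_iff_witness
    {Q : Type} [Fintype Q] {d : ℕ} (M : ACV Q d) (hM : SelfLoopVASS M)
    (p q : Q) (u v : Vec d) (hu : NonNeg u) (hv : NonNeg v) :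
    Covers M (p, u) (q, v) ↔
      ∃ (k : ℕ) (hk : 1 ≤ k) (ps : Fin k → Q) (us us' : Fin k → Vec d),
        Function.Injective ps ∧
        ps ⟨0, by omega⟩ = p ∧ us ⟨0, by omega⟩ = u ∧
        ps ⟨k - 1, by omega⟩ = q ∧ v ≤ us' ⟨k - 1, by omega⟩ ∧
        (∀ i : Fin k, Covers M (ps i, us i) (ps i, us' i)) ∧
        (∀ (i : ℕ) (h1 : i + 1 < k), ∃ (α : ℚ) (t : Trans Q d),
          Step M (ps ⟨i, by omega⟩, us' ⟨i, by omega⟩) α t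
            (ps ⟨i + 1, h1⟩, us ⟨i + 1, h1⟩)) := by
  constructor
  · rintro ⟨v', hv', π, hr⟩
    obtain ⟨l, hw⟩ := hr.wit
    obtain ⟨n, ps, us, us', hinj, -, h1, h2, h3, h4, h5, h6⟩ := hw.fn
    refine ⟨n + 1, by omega, fun i => ps i, fun i => us i, fun i => us' i, ?_, h1, h2, h3, ?_,
      ?_, ?_⟩
    · intro i j he
      exact Fin.ext (hinj i j (by omega) (by omega) he)
    · show v ≤ us' n
      rw [h4]
      exact hv'
    · intro i
      exact (h5 i (by omega)).covers
    · intro i hi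
      exact h6 i (by omega)
  · rintro ⟨k, hk, ps, us, us', -, h1, h2, h3, h4, h5, h6⟩
    have key : ∀ (i : ℕ) (hi : i < k), Covers M (p, u) (ps ⟨i, hi⟩, us' ⟨i, hi⟩) := by
      intro i
      induction i with
      | zero =>
        intro hi
        have := h5 ⟨0, hi⟩
        rw [h2] at this
        rw [h1] at this ⊢
        exact this
      | succ i ih =>
        intro hi
        obtain ⟨α, t, hs⟩ := h6 i hi
        exact ((ih (by omega)).trans' hM hs.reach.covers).trans' hM (h5 ⟨i + 1, hi⟩)
    obtain ⟨w, hw, hr⟩ := key (k - 1) (by omega)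
    refine ⟨w, h4.trans hw, ?_⟩
    rw [← h3]
    exact hr

end ACVASS
end

section
/- Let M be a d-dimensional affine continuous VASS all of whose transition matrices are non-negative self-loop matrices. If p(u) →^π q(v) is a run, then for every rational α ∈ (0,1] there is a run p(α·u) →^{α·π} q(α·v). -/
namespace ACVASS

/-- Auxiliary form of the scaling lemma on whole configurations. -/
theorem run_scale_aux {Q : Type} {d : ℕ} (M : ACV Q d) (α : ℚ) (hα0 : 0 < α) (hα1 : α ≤ 1)
    {C C' : Conf Q d} {π : FSeq Q d} (h : Run M C π C') :
    Run M (C.1, α • C.2) (scaleSeq α π) (C'.1, α • C'.2) := by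
  have hn : ∀ w : Vec d, NonNeg w → NonNeg (α • w) := fun w hw i =>
    mul_nonneg hα0.le (hw i)
  induction h with
  | nil C h => exact Run.nil _ (hn _ h)
  | cons hs _ ih =>
    obtain ⟨h1, h2, h3, h4, h5, h6, h7, h8⟩ := hs
    refine Run.cons (C' := (_, α • _)) ?_ ih
    refine ⟨h1, mul_pos hα0 h2, mul_le_one₀ hα1 h2.le h3, h4, h5, hn _ h6, hn _ h7, ?_⟩
    simp only [h8, smul_add, Matrix.mulVec_smul, smul_smul]

/-- runs can be scaled by any fraction `α ∈ (0,1]`. -/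
theorem run_scale
    {Q : Type} [Fintype Q] {d : ℕ} (M : ACV Q d) (hM : SelfLoopVASS M)
    (p q : Q) (u v : Vec d) (π : FSeq Q d) (hrun : Run M (p, u) π (q, v))
    (α : ℚ) (hα0 : 0 < α) (hα1 : α ≤ 1) :
    Run M (p, α • u) (scaleSeq α π) (q, α • v) := by
  exact run_scale_aux M α hα0 hα1 hrun

end ACVASS
end

section
/- Let M be a d-dimensional affine continuous VASS all of whose transition matrices are non-negative self-loop matrices. If p(u) →^π q(v) is a run, then for every w ∈ ℚ₊^d there exists v' ∈ ℚ₊^d with v' ≥ v + w componentwise such that p(u + w) →^π q(v'). -/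
namespace ACVASS

theorem mulVec_ge {d : ℕ} (A : Mat d) (hA : SelfLoopMat A) (w : Vec d) (hw : NonNeg w) (i : Fin d) :
    w i ≤ (castMat A).mulVec w i := by
  have h1 : (1 : ℚ) ≤ castMat A i i := by
    have h0 := hA.1 i i
    have h2 := hA.2 i
    have h3 : 1 ≤ A i i := by omega
    simp only [castMat, Matrix.map_apply]
    exact_mod_cast h3
  have h4 : castMat A i i * w i ≤ ∑ j, castMat A i j * w j := by
    apply Finset.single_le_sum (f := fun j => castMat A i j * w j) _ (Finset.mem_univ i)
    intro j _
    apply mul_nonneg _ (hw j)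
    simp only [castMat, Matrix.map_apply]
    exact_mod_cast hA.1 i j
  have h5 : w i ≤ castMat A i i * w i := le_mul_of_one_le_left (hw i) h1
  exact h5.trans h4

theorem run_add_aux {Q : Type} {d : ℕ} (M : ACV Q d) (hM : SelfLoopVASS M)
    {C C' : Conf Q d} {π : FSeq Q d} (hrun : Run M C π C') :
    ∀ w : Vec d, NonNeg w →
    ∃ v' : Vec d, NonNeg v' ∧ C'.2 + w ≤ v' ∧ Run M (C.1, C.2 + w) π (C'.1, v') := by
  induction hrun with
  | nil C h =>
    intro w hw
    have h' : NonNeg (C.2 + w) := fun i => add_nonneg (h i) (hw i)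
    exact ⟨C.2 + w, h', le_refl _, Run.nil _ h'⟩
  | @cons C C' C'' α t π hs _ ih =>
    intro w hw
    obtain ⟨ht, ha, ha1, hsrc, htgt, hn, hn', he⟩ := hs
    have hge := mulVec_ge t.mat (hM t ht) w hw
    have hw' : NonNeg ((castMat t.mat).mulVec w) := fun i => (hw i).trans (hge i)
    obtain ⟨v', hv', hle, hr⟩ := ih _ hw'
    refine ⟨v', hv', fun i => le_trans ?_ (hle i), Run.cons (C' := (C'.1, C'.2 + (castMat t.mat).mulVec w)) ⟨ht, ha, ha1, hsrc, htgt, fun i => add_nonneg (hn i) (hw i), fun i => add_nonneg (hn' i) (hw' i), ?_⟩ hr⟩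
    · simp only [Pi.add_apply]
      exact add_le_add_right (hge i) _
    · simp only [he, Matrix.mulVec_add]
      abel

/-- runs are monotone under adding a non-negative vector. -/
theorem run_add
    {Q : Type} [Fintype Q] {d : ℕ} (M : ACV Q d) (hM : SelfLoopVASS M)
    (p q : Q) (u v : Vec d) (π : FSeq Q d) (hrun : Run M (p, u) π (q, v))
    (w : Vec d) (hw : NonNeg w) :
    ∃ v' : Vec d, NonNeg v' ∧ v + w ≤ v' ∧ Run M (p, u + w) π (q, v') := by
  exact run_add_aux M hM hrun w hw

end ACVASS
end

section
/- (Soundness of the support abstraction) Let M be a d-dimensional affine continuous VASS all of whose transition matrices have only non-negative entries. If p(u) →^{αt} q(v) is a step of M with t = (p,A,b,q), then for every counter x: (i) if b(x) < 0 then supp_t^-(x) ∩ supp(u) ≠ ∅; (ii) if b(x) > 0 then v(x) > 0; (iii) if v(x) > 0 then b(x) > 0 or supp_t^-(x) ∩ supp(u) ≠ ∅. Consequently (p, supp(u)) →^t (q, supp(v)) is an edge of the support abstraction SU_M. -/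
namespace ACVASS

/-- Soundness of the support abstraction. -/
theorem support_abstraction_sound
    {Q : Type} [Fintype Q] {d : ℕ} (M : ACV Q d) (hM : NonNegVASS M)
    (p q : Q) (u v : Vec d) (α : ℚ) (t : Trans Q d)
    (hstep : Step M (p, u) α t (q, v)) :
    (∀ x : Fin d,
      (t.upd x < 0 → (suppMinus t x ∩ supp u).Nonempty) ∧
      (0 < t.upd x → 0 < v x) ∧
      (0 < v x → 0 < t.upd x ∨ (suppMinus t x ∩ supp u).Nonempty)) ∧
    SuppEdge M (p, supp u) t (q, supp v) := by
  obtain ⟨ht, hα, -, hp, hq, hu, hv, he⟩ := hstep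
  have hA := hM t ht
  simp only at hp hq hu hv he
  have hx : ∀ x, v x = (∑ y, (t.mat x y : ℚ) * u y) + α * (t.upd x : ℚ) := by
    intro x
    rw [he]
    rfl
  have hterm : ∀ x y, 0 ≤ (t.mat x y : ℚ) * u y := fun x y =>
    mul_nonneg (by exact_mod_cast hA x y) (hu y)
  have hs : ∀ x, 0 ≤ ∑ y, (t.mat x y : ℚ) * u y := fun x =>
    Finset.sum_nonneg fun y _ => hterm x y
  have hpos : ∀ x, 0 < (∑ y, (t.mat x y : ℚ) * u y) →
      (suppMinus t x ∩ supp u).Nonempty := by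
    intro x h
    obtain ⟨y, -, hy⟩ := Finset.exists_ne_zero_of_sum_ne_zero h.ne'
    have h1 : t.mat x y ≠ 0 := by
      intro h0
      exact hy (by simp [h0])
    exact ⟨y, lt_of_le_of_ne (hA x y) h1.symm, right_ne_zero_of_mul hy⟩
  have main : ∀ x : Fin d,
      (t.upd x < 0 → (suppMinus t x ∩ supp u).Nonempty) ∧
      (0 < t.upd x → 0 < v x) ∧
      (0 < v x → 0 < t.upd x ∨ (suppMinus t x ∩ supp u).Nonempty) := by
    intro x
    refine ⟨fun hb => hpos x ?_, fun hb => ?_, fun hvx => ?_⟩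
    · have hb' : (t.upd x : ℚ) < 0 := by exact_mod_cast hb
      have := mul_neg_of_pos_of_neg hα hb'
      have := hv x
      have := hx x
      linarith
    · have hb' : 0 < (t.upd x : ℚ) := by exact_mod_cast hb
      have := mul_pos hα hb'
      have := hs x
      have := hx x
      linarith
    · by_cases hb : 0 < t.upd x
      · exact Or.inl hb
      · right
        apply hpos
        have hb' : (t.upd x : ℚ) ≤ 0 := by exact_mod_cast not_lt.mp hb
        have := mul_nonpos_of_nonneg_of_nonpos hα.le hb'
        have := hx x
        linarith
  refine ⟨main, ht, hp, hq, fun x => ⟨(main x).1, fun h => ((main x).2.1 h).ne', fun h => ?_⟩⟩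
  exact (main x).2.2 (lt_of_le_of_ne (hv x) (Ne.symm h))

end ACVASS
end
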